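/- arXiv:math/0210307 — 2 statements merged into one kernel-verified Lean document; each statement's English description precedes it below -/
import Mathlib

section
/- Let G be a group and m ≥ 1 an integer. Two m-tuples τ, τ' ∈ G^m are Nielsen-equivalent in G if and only if there exists an automorphism α of the free group FreeGroup (Fin m) such that for every i, τ'(i) = (FreeGroup.lift τ)(α(FreeGroup.of i)). -/
/-- An elementary Nielsen move on an `m`-tuple of elements of a group `G`:
replace some `gᵢ` by `gᵢ⁻¹`, or interchange `gᵢ` and `gⱼ` for some `i ≠ j`,
or replace `gᵢ` by `gᵢ * gⱼ` for some `i ≠ j`. -/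
def NielsenMove {G : Type*} [Group G] {m : ℕ} (τ τ' : Fin m → G) : Prop :=
  (∃ i, τ' = Function.update τ i (τ i)⁻¹) ∨
  (∃ i j, i ≠ j ∧ τ' = τ ∘ Equiv.swap i j) ∨
  (∃ i j, i ≠ j ∧ τ' = Function.update τ i (τ i * τ j))

/-- Two `m`-tuples are Nielsen-equivalent in `G` if one is obtained from the
other by a finite chain of elementary Nielsen moves. -/
def NielsenEquiv {G : Type*} [Group G] {m : ℕ} (τ τ' : Fin m → G) : Prop :=
  Relation.ReflTransGen NielsenMove τ τ'

/-- The length of the longest common prefix of two lists. -/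
def List.lcpLength {α : Type*} [DecidableEq α] : List α → List α → ℕ
  | a :: l, b :: l' => if a = b then lcpLength l l' + 1 else 0
  | _, _ => 0

namespace List

variable {α : Type*} [DecidableEq α]

@[simp]
theorem lcpLength_nil_left (l : List α) : lcpLength [] l = 0 := by
  cases l <;> rfl

@[simp]
theorem lcpLength_nil_right (l : List α) : lcpLength l [] = 0 := by
  cases l <;> rfl

theorem lcpLength_cons_cons (a b : α) (l l' : List α) :
    lcpLength (a :: l) (b :: l') = if a = b then lcpLength l l' + 1 else 0 := rfl

theorem lcpLength_comm (l l' : List α) : lcpLength l l' = lcpLength l' l := by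
  induction l generalizing l' with
  | nil => simp
  | cons a l ih =>
    cases l' with
    | nil => simp
    | cons b l' => simp only [lcpLength_cons_cons, ih l', eq_comm]

theorem exists_eq_append_of_lcpLength (l l' : List α) :
    ∃ p s t, l = p ++ s ∧ l' = p ++ t ∧ p.length = lcpLength l l' ∧
      ∀ x ∈ s.head?, ∀ y ∈ t.head?, x ≠ y := by
  induction l generalizing l' with
  | nil => exact ⟨[], [], l', by simp⟩
  | cons a l ih =>
    cases l' with
    | nil => exact ⟨[], a :: l, [], by simp⟩
    | cons b l' =>
      by_cases h : a = b
      · obtain ⟨p, s, t, rfl, rfl, hp, hst⟩ := ih l'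
        exact ⟨a :: p, s, t, by simp, by simp [h], by simp [lcpLength_cons_cons, h, hp], hst⟩
      · exact ⟨[], a :: l, b :: l', by simp, by simp, by simp [lcpLength_cons_cons, h], by simpa⟩

theorem lcpLength_eq_of_lt {l₁ l₂ l₃ : List α} (h : lcpLength l₁ l₂ < lcpLength l₂ l₃) :
    lcpLength l₁ l₃ = lcpLength l₁ l₂ := by
  induction l₁ generalizing l₂ l₃ with
  | nil => simp
  | cons a l₁ ih =>
    cases l₂ with
    | nil => simp at h
    | cons b l₂ =>
      cases l₃ with
      | nil => simp at h
      | cons c l₃ =>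
        simp only [lcpLength_cons_cons] at h ⊢
        have := @ih l₂ l₃
        grind

end List

namespace FreeGroup

variable {α : Type*} [DecidableEq α]

/-- The number of letters of `y` that cancel in the product `x * y`. -/
def cancelLength (x y : FreeGroup α) : ℕ := x⁻¹.toWord.lcpLength y.toWord

theorem cancelLength_inv_inv (x y : FreeGroup α) :
    cancelLength y⁻¹ x⁻¹ = cancelLength x y := by
  simp only [cancelLength, inv_inv]
  exact List.lcpLength_comm _ _

theorem toWord_mk_of_isReduced {L : List (α × Bool)} (h : IsReduced L) : (mk L).toWord = L := by
  rw [toWord_mk, h.reduce_eq]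

theorem IsReduced.invRev {L : List (α × Bool)} (h : IsReduced L) :
    IsReduced (FreeGroup.invRev L) := by
  rw [isReduced_iff_reduce_eq, reduce_invRev, h.reduce_eq]

theorem isReduced_invRev_append {s t : List (α × Bool)} (hs : IsReduced s) (ht : IsReduced t)
    (h : ∀ x ∈ s.head?, ∀ y ∈ t.head?, x ≠ y) : IsReduced (invRev s ++ t) := by
  refine List.isChain_append.2 ⟨hs.invRev, ht, ?_⟩
  intro x hx y hy hxy
  have hx' : (x.1, !x.2) ∈ s.head? := by
    cases s with
    | nil => simp [FreeGroup.invRev] at hx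
    | cons a s =>
      simp only [FreeGroup.invRev, List.map_cons, List.reverse_cons, List.getLast?_concat,
        Option.mem_def, Option.some.injEq] at hx
      simp [← hx]
  have := h _ hx' _ hy
  rcases x with ⟨x, b⟩
  rcases y with ⟨y, c⟩
  simp only at hxy
  subst hxy
  cases b <;> cases c <;> simp_all

theorem exists_toWord_mul_eq (x y : FreeGroup α) :
    ∃ p s t, x⁻¹.toWord = p ++ s ∧ y.toWord = p ++ t ∧ p.length = cancelLength x y ∧
      (x * y).toWord = invRev s ++ t := by
  obtain ⟨p, s, t, hx, hy, hp, hst⟩ :=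
    List.exists_eq_append_of_lcpLength x⁻¹.toWord y.toWord
  refine ⟨p, s, t, hx, hy, hp, ?_⟩
  have hxr : IsReduced (p ++ s) := hx ▸ isReduced_toWord
  have hyr : IsReduced (p ++ t) := hy ▸ isReduced_toWord
  rw [← toWord_mk_of_isReduced (isReduced_invRev_append
    (hxr.infix (List.suffix_append _ _).isInfix) (hyr.infix (List.suffix_append _ _).isInfix) hst)]
  congr 1
  rw [← inv_inv x, ← mk_toWord (x := x⁻¹), ← mk_toWord (x := y), hx, hy, ← mul_mk, ← mul_mk,
    ← mul_mk, ← inv_mk]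
  group

theorem norm_mul_add_two_mul_cancelLength (x y : FreeGroup α) :
    norm (x * y) + 2 * cancelLength x y = norm x + norm y := by
  obtain ⟨p, s, t, hx, hy, hp, hxy⟩ := exists_toWord_mul_eq x y
  rw [← norm_inv_eq (x := x), norm, norm, norm, hx, hy, hxy, ← hp]
  simp
  omega

theorem eq_one_of_prefix_eq {x : FreeGroup α} {p s t : List (α × Bool)}
    (hs : x⁻¹.toWord = p ++ s) (ht : x.toWord = p ++ t) (hp : norm x ≤ 2 * p.length) : x = 1 := by
  have hx : x.toWord = invRev s ++ invRev p := by
    rw [← inv_inv x, toWord_inv, hs, invRev_append]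
  have hlen := congrArg List.length hx
  have hlen' := congrArg List.length ht
  simp only [norm] at hp
  simp only [List.length_append, invRev_length] at hlen hlen'
  obtain ⟨q, rfl, hq⟩ : ∃ q, p = invRev s ++ q ∧ invRev p = q ++ t := by
    rcases List.append_eq_append_iff.1 (ht.symm.trans hx) with ⟨q, h₁, h₂⟩ | ⟨q, h₁, h₂⟩
    · have hq : q = [] := by
        have := congrArg List.length h₁
        simp only [List.length_append, invRev_length] at this
        exact List.length_eq_zero_iff.1 (by omega)
      subst hq
      exact ⟨[], by simpa using h₁.symm, by simpa using h₂.symm⟩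
    · exact ⟨q, h₁, h₂⟩
  have hq' : invRev q = q := by
    rw [invRev_append, invRev_invRev] at hq
    exact (List.append_inj hq (by simp)).1
  have hq1 : mk q = 1 := by
    have : mk q ^ 2 = 1 := by
      rw [pow_two]
      nth_rewrite 1 [← hq']
      rw [← inv_mk, inv_mul_cancel]
    exact pow_left_injective two_ne_zero (by simpa only [one_pow] using this)
  rw [← mk_toWord (x := x), hx, ← mul_mk, ← inv_mk, ← inv_mk, ← mul_mk, ← inv_mk, hq1]
  group

theorem two_mul_cancelLength_self_lt {x : FreeGroup α} (hx : x ≠ 1) :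
    2 * cancelLength x x < norm x := by
  obtain ⟨p, s, t, hs, ht, hp, -⟩ := exists_toWord_mul_eq x x
  by_contra! h
  exact hx (eq_one_of_prefix_eq hs ht (hp ▸ h))

/-- If the cancellations in consecutive factors of a product never exhaust a factor, then the
product is at least as long as its number of factors. -/
theorem length_le_norm_prod {β : Type*} {R : β → β → Prop} {v : β → FreeGroup α}
    (hrefl : ∀ a, R a a)
    (h₂ : ∀ a b, R a b → cancelLength (v a) (v b) < norm (v a) ∧
      cancelLength (v a) (v b) < norm (v b))
    (h₃ : ∀ a b c, R a b → R b c →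
      cancelLength (v a) (v b) + cancelLength (v b) (v c) < norm (v b))
    (L : List β) (hL : L.IsChain R) : L.length ≤ norm (L.map v).prod := by
  suffices H : ∀ a b L, R b a → (a :: L).IsChain R →
      cancelLength (v b) ((a :: L).map v).prod = cancelLength (v b) (v a) ∧
      cancelLength (v b) (v a) + L.length + 1 ≤ norm ((a :: L).map v).prod by
    cases L with
    | nil => simp
    | cons a L =>
      have := (H a a L (hrefl a) hL).2
      simp only [List.length_cons]
      omega
  intro a b L hba hL
  induction L generalizing a b with
  | nil =>
    have := h₂ b a hba
    simp only [List.map_cons, List.map_nil, List.prod_cons, List.prod_nil, mul_one,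
      List.length_nil, true_and]
    omega
  | cons c L ih =>
    rw [List.isChain_cons_cons] at hL
    obtain ⟨ih₁, ih₂⟩ := ih c a hL.1 hL.2
    rw [List.map_cons, List.prod_cons]
    set w := ((c :: L).map v).prod
    have h3 := h₃ b a c hba hL.1
    have hw := norm_mul_add_two_mul_cancelLength (v a) w
    have hw' := norm_mul_add_two_mul_cancelLength (v a)⁻¹ (v a * w)
    rw [inv_mul_cancel_left, norm_inv_eq] at hw'
    refine ⟨List.lcpLength_eq_of_lt ?_, ?_⟩
    · have : cancelLength (v a)⁻¹ (v a * w) = (v a).toWord.lcpLength (v a * w).toWord := by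
        rw [cancelLength, inv_inv]
      rw [← this]
      change cancelLength (v b) (v a) < _
      omega
    · simp only [List.length_cons]
      omega

end FreeGroup

namespace FreeGroup

section Rank

variable {α : Type*} [Fintype α]

/-- The position of a word in a lexicographic enumeration of the words of a given length. -/
noncomputable def wordRank (L : List (α × Bool)) : ℕ :=
  Nat.ofDigits (Fintype.card (α × Bool) + 1)
    (L.map fun a ↦ (Fintype.equivFin (α × Bool) a : ℕ)).reverse

theorem wordRank_append (p s : List (α × Bool)) :
    wordRank (p ++ s) = wordRank s + (Fintype.card (α × Bool) + 1) ^ s.length * wordRank p := by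
  simp [wordRank, Nat.ofDigits_append]

theorem wordRank_le_of_append_le {p q s : List (α × Bool)}
    (h : wordRank (p ++ s) ≤ wordRank (q ++ s)) : wordRank p ≤ wordRank q := by
  rw [wordRank_append, wordRank_append] at h
  exact Nat.le_of_mul_le_mul_left (Nat.le_of_add_le_add_left h) (by positivity)

theorem wordRank_injOn {p q : List (α × Bool)} (hlen : p.length = q.length)
    (h : wordRank p = wordRank q) : p = q := by
  cases p with
  | nil => exact (List.length_eq_zero_iff.1 hlen.symm).symm
  | cons a p =>
    have hcard : 0 < Fintype.card (α × Bool) := Fintype.card_pos_iff.2 ⟨a⟩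
    have := Nat.ofDigits_inj_of_len_eq (by omega) (by simpa using hlen)
      (by simp only [List.mem_reverse, List.mem_map]; rintro _ ⟨b, -, rfl⟩; omega)
      (by simp only [List.mem_reverse, List.mem_map]; rintro _ ⟨b, -, rfl⟩; omega) h
    refine List.map_injective_iff.2 ?_ (List.reverse_injective this)
    exact Fin.val_injective.comp (Equiv.injective _)

variable [DecidableEq α]

/-- The rank of the initial half of the reduced word of an element. -/
noncomputable def halfRank (x : FreeGroup α) : ℕ :=
  wordRank (x.toWord.take ((norm x + 1) / 2))

/-- The complexity of an element: its length, and then the ranks of the initial halves of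
the element and of its inverse. -/
noncomputable def complexity (x : FreeGroup α) : ℕ ×ₗ ℕ :=
  toLex (norm x, halfRank x + halfRank x⁻¹)

theorem complexity_inv (x : FreeGroup α) : complexity x⁻¹ = complexity x := by
  simp [complexity, add_comm]

theorem norm_le_of_complexity_le {x y : FreeGroup α} (h : complexity x ≤ complexity y) :
    norm x ≤ norm y := by
  rcases Prod.Lex.toLex_le_toLex.1 h with h | h
  · exact h.le
  · exact h.1.le

theorem wordRank_take_le_of_complexity_le {x y : FreeGroup α}
    (hy : norm y = 2 * cancelLength x y) (hx : 2 * cancelLength x y ≤ norm x)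
    (h : complexity x ≤ complexity (x * y)) :
    wordRank (y.toWord.take (cancelLength x y)) ≤
      wordRank (y⁻¹.toWord.take (cancelLength x y)) := by
  have hn := norm_mul_add_two_mul_cancelLength x y
  have hxy : norm (x * y) = norm x := by omega
  replace h : halfRank x + halfRank x⁻¹ ≤ halfRank (x * y) + halfRank (x * y)⁻¹ := by
    rcases Prod.Lex.toLex_le_toLex.1 h with h | h
    · exact absurd h (by simp [hxy])
    · exact h.2
  obtain ⟨p, s, t, hps, hpt, hp, hst⟩ := exists_toWord_mul_eq x y
  have hx' : x.toWord = invRev s ++ invRev p := by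
    rw [← inv_inv x, toWord_inv, hps, invRev_append]
  have hy' : y⁻¹.toWord = invRev t ++ invRev p := by rw [toWord_inv, hpt, invRev_append]
  have hxy' : (x * y)⁻¹.toWord = invRev t ++ s := by
    rw [toWord_inv, hst, invRev_append, invRev_invRev]
  have hyl : p.length + t.length = norm y := by simp [norm, hpt]
  have hxl : s.length + p.length = norm x := by simp [norm, hx']
  simp only [halfRank, norm_inv_eq, hxy] at h
  have hs : (norm x + 1) / 2 ≤ (invRev s).length := by rw [invRev_length]; omega
  have ht : (invRev t).length ≤ (norm x + 1) / 2 := by rw [invRev_length]; omega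
  rw [hx', hst, hps, hxy', List.take_append_of_le_length hs, List.take_append_of_le_length hs,
    List.take_append, List.take_append, List.take_of_length_le (l := p) (by omega),
    List.take_of_length_le ht, invRev_length, show t.length = p.length by omega] at h
  rw [← hp, hy', hpt, List.take_left, List.take_left' (by rw [invRev_length]; omega)]
  exact wordRank_le_of_append_le (Nat.le_of_add_le_add_left h)

end Rank

end FreeGroup

section Nielsen

open Function
open FreeGroup

variable {G H : Type*} [Group G] [Group H] {m : ℕ}

namespace NielsenEquiv

theorem refl (τ : Fin m → G) : NielsenEquiv τ τ :=
  Relation.ReflTransGen.refl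

theorem update_inv (τ : Fin m → G) (i : Fin m) : NielsenEquiv τ (update τ i (τ i)⁻¹) :=
  .single (.inl ⟨i, rfl⟩)

theorem comp_swap (τ : Fin m → G) (i j : Fin m) : NielsenEquiv τ (τ ∘ Equiv.swap i j) := by
  by_cases h : i = j
  · subst h
    simpa using refl τ
  · exact .single (.inr (.inl ⟨i, j, h, rfl⟩))

theorem update_mul (τ : Fin m → G) {i j : Fin m} (h : i ≠ j) :
    NielsenEquiv τ (update τ i (τ i * τ j)) :=
  .single (.inr (.inr ⟨i, j, h, rfl⟩))

theorem trans {τ₁ τ₂ τ₃ : Fin m → G} (h : NielsenEquiv τ₁ τ₂) (h' : NielsenEquiv τ₂ τ₃) :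
    NielsenEquiv τ₁ τ₃ :=
  Relation.ReflTransGen.trans h h'

theorem update_mul_inv (τ : Fin m → G) {i j : Fin m} (h : i ≠ j) :
    NielsenEquiv τ (update τ i (τ i * (τ j)⁻¹)) := by
  have := ((update_inv τ j).trans (update_mul _ h)).trans (update_inv _ j)
  convert this using 1
  ext k
  simp only [update_apply]
  grind [inv_inv]

theorem symm {τ τ' : Fin m → G} (h : NielsenEquiv τ τ') : NielsenEquiv τ' τ := by
  induction h with
  | refl => exact refl _
  | @tail σ σ' _ hs ih =>
    refine trans ?_ ih
    rcases hs with ⟨i, rfl⟩ | ⟨i, j, -, rfl⟩ | ⟨i, j, hij, rfl⟩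
    · simpa using update_inv (update σ i (σ i)⁻¹) i
    · convert comp_swap (σ ∘ Equiv.swap i j) i j
      ext k
      simp
    · simpa [hij.symm] using update_mul_inv (update σ i (σ i * σ j)) hij

theorem map (f : G →* H) {τ τ' : Fin m → G} (h : NielsenEquiv τ τ') :
    NielsenEquiv (f ∘ τ) (f ∘ τ') := by
  refine Relation.ReflTransGen.lift (fun σ ↦ f ∘ σ) ?_ _ _ h
  rintro σ _ (⟨i, rfl⟩ | ⟨i, j, hij, rfl⟩ | ⟨i, j, hij, rfl⟩)
  · exact .inl ⟨i, by simp [comp_update]⟩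
  · exact .inr (.inl ⟨i, j, hij, rfl⟩)
  · exact .inr (.inr ⟨i, j, hij, by simp [comp_update]⟩)

theorem comp_perm (τ : Fin m → G) (e : Equiv.Perm (Fin m)) : NielsenEquiv τ (τ ∘ e) := by
  induction e using Equiv.Perm.swap_induction_on' with
  | one => exact refl _
  | mul_swap e x y _ ih => exact ih.trans (comp_swap _ x y)

theorem of_eq_or_eq_inv {τ τ' : Fin m → G} (h : ∀ i, τ' i = τ i ∨ τ' i = (τ i)⁻¹) :
    NielsenEquiv τ τ' := by
  suffices H : ∀ s : Finset (Fin m), NielsenEquiv τ (s.piecewise τ' τ) by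
    simpa using H Finset.univ
  intro s
  induction s using Finset.induction_on with
  | empty => simpa using refl τ
  | insert i s hi ih =>
    refine ih.trans ?_
    rw [Finset.piecewise_insert]
    rcases h i with h | h
    · rw [h, ← Finset.piecewise_eq_of_notMem s τ' τ hi, update_eq_self]
      exact refl _
    · rw [h, ← Finset.piecewise_eq_of_notMem s τ' τ hi]
      exact update_inv _ i

end NielsenEquiv

/-- The entry of a tuple, or its inverse, named by a letter of the free group. -/
def tupleLetter (τ : Fin m → G) (a : Fin m × Bool) : G := cond a.2 (τ a.1) (τ a.1)⁻¹

theorem tupleLetter_not (τ : Fin m → G) (i : Fin m) (b : Bool) :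
    tupleLetter τ (i, !b) = (tupleLetter τ (i, b))⁻¹ := by
  cases b <;> simp [tupleLetter]

theorem lift_eq_prod_tupleLetter (τ : Fin m → G) (x : FreeGroup (Fin m)) :
    FreeGroup.lift τ x = (x.toWord.map (tupleLetter τ)).prod := by
  conv_lhs => rw [← mk_toWord (x := x), lift_mk]
  rfl

theorem NielsenEquiv.update_tupleLetter_mul (τ : Fin m → G) {a b : Fin m × Bool} (h : a.1 ≠ b.1) :
    NielsenEquiv τ (update τ a.1 (tupleLetter τ a * tupleLetter τ b)) := by
  have key : ∀ σ : Fin m → G, NielsenEquiv σ (update σ a.1 (σ a.1 * tupleLetter σ b)) := by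
    intro σ
    rcases b with ⟨j, _ | _⟩
    · exact update_mul_inv σ h
    · exact update_mul σ h
  rcases a with ⟨i, _ | _⟩
  · simpa [tupleLetter, h.symm] using (update_inv τ i).trans (key _)
  · exact key τ

theorem NielsenEquiv.exists_aut {τ τ' : Fin m → G} (h : NielsenEquiv τ τ') :
    ∃ α : MulAut (FreeGroup (Fin m)), ∀ i, τ' i = FreeGroup.lift τ (α (FreeGroup.of i)) := by
  induction h with
  | refl => exact ⟨1, by simp⟩
  | @tail σ σ' _ hs ih =>
    obtain ⟨α, hα⟩ := ih
    suffices H : ∃ β : MulAut (FreeGroup (Fin m)),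
        ∀ i, σ' i = FreeGroup.lift σ (β (FreeGroup.of i)) by
      obtain ⟨β, hβ⟩ := H
      refine ⟨α * β, fun i ↦ ?_⟩
      have : FreeGroup.lift σ = (FreeGroup.lift τ).comp α.toMonoidHom :=
        FreeGroup.ext_hom _ _ fun j ↦ by simp [hα]
      rw [hβ, this]
      rfl
    rcases hs with ⟨i, rfl⟩ | ⟨i, j, -, rfl⟩ | ⟨i, j, hij, rfl⟩
    · let f : FreeGroup (Fin m) →* FreeGroup (Fin m) :=
        FreeGroup.lift (update FreeGroup.of i (FreeGroup.of i)⁻¹)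
      have hf : f.comp f = MonoidHom.id _ := FreeGroup.ext_hom _ _ fun k ↦ by
        by_cases hk : k = i
        · subst hk; simp [f]
        · simp [f, hk]
      refine ⟨MonoidHom.toMulEquiv f f hf hf, fun k ↦ ?_⟩
      by_cases hk : k = i
      · subst hk; simp [f]
      · simp [f, hk]
    · exact ⟨freeGroupCongr (Equiv.swap i j), fun k ↦ by simp⟩
    · let f : FreeGroup (Fin m) →* FreeGroup (Fin m) :=
        FreeGroup.lift (update FreeGroup.of i (FreeGroup.of i * FreeGroup.of j))
      let g : FreeGroup (Fin m) →* FreeGroup (Fin m) :=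
        FreeGroup.lift (update FreeGroup.of i (FreeGroup.of i * (FreeGroup.of j)⁻¹))
      have hfg : f.comp g = MonoidHom.id _ := FreeGroup.ext_hom _ _ fun k ↦ by
        by_cases hk : k = i
        · subst hk; simp [f, g, hij.symm]
        · simp [f, g, hk]
      have hgf : g.comp f = MonoidHom.id _ := FreeGroup.ext_hom _ _ fun k ↦ by
        by_cases hk : k = i
        · subst hk; simp [f, g, hij.symm]
        · simp [f, g, hk]
      refine ⟨MonoidHom.toMulEquiv f g hgf hfg, fun k ↦ ?_⟩
      by_cases hk : k = i
      · subst hk; simp [f]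
      · simp [f, hk]

/-- A tuple in a free group whose complexity is minimal in its Nielsen class. -/
def IsNielsenMinimal (τ : Fin m → FreeGroup (Fin m)) : Prop :=
  ∀ σ, NielsenEquiv τ σ → ∑ i, complexity (τ i) ≤ ∑ i, complexity (σ i)

theorem exists_nielsenEquiv_isNielsenMinimal (τ : Fin m → FreeGroup (Fin m)) :
    ∃ σ, NielsenEquiv τ σ ∧ IsNielsenMinimal σ := by
  let f : (Fin m → FreeGroup (Fin m)) → ℕ ×ₗ ℕ := fun σ ↦ ∑ i, complexity (σ i)
  refine ⟨argminOn f {σ | NielsenEquiv τ σ} ⟨τ, .refl τ⟩,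
    argminOn_mem f {σ | NielsenEquiv τ σ} _, fun σ hσ ↦ argminOn_le f _ ?_⟩
  exact NielsenEquiv.trans (argminOn_mem f {σ | NielsenEquiv τ σ} _) hσ

namespace IsNielsenMinimal

variable {τ : Fin m → FreeGroup (Fin m)}

theorem complexity_le (hτ : IsNielsenMinimal τ) {i : Fin m} {x : FreeGroup (Fin m)}
    (h : NielsenEquiv τ (update τ i x)) : complexity (τ i) ≤ complexity x := by
  have := hτ _ h
  contrapose! this
  refine Finset.sum_lt_sum (fun j _ ↦ ?_) ⟨i, Finset.mem_univ i, by simpa using this⟩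
  by_cases hj : j = i
  · subst hj; simpa using this.le
  · simp [hj]

theorem complexity_tupleLetter (τ : Fin m → FreeGroup (Fin m)) (a : Fin m × Bool) :
    complexity (tupleLetter τ a) = complexity (τ a.1) := by
  rcases a with ⟨i, _ | _⟩ <;> simp [tupleLetter, complexity_inv]

theorem complexity_le_mul_left (hτ : IsNielsenMinimal τ) {a b : Fin m × Bool} (h : a.1 ≠ b.1) :
    complexity (tupleLetter τ a) ≤ complexity (tupleLetter τ a * tupleLetter τ b) := by
  rw [complexity_tupleLetter]
  exact hτ.complexity_le (.update_tupleLetter_mul τ h)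

theorem complexity_le_mul_right (hτ : IsNielsenMinimal τ) {a b : Fin m × Bool} (h : a.1 ≠ b.1) :
    complexity (tupleLetter τ b) ≤ complexity (tupleLetter τ a * tupleLetter τ b) := by
  have := hτ.complexity_le_mul_left (a := (b.1, !b.2)) (b := (a.1, !a.2)) h.symm
  rwa [tupleLetter_not, tupleLetter_not, complexity_inv, ← mul_inv_rev, complexity_inv] at this

theorem tupleLetter_ne_one (hne : ∀ i, τ i ≠ 1) (a : Fin m × Bool) : tupleLetter τ a ≠ 1 := by
  rcases a with ⟨i, _ | _⟩ <;> simp [tupleLetter, hne]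

theorem two_mul_cancelLength_le (hτ : IsNielsenMinimal τ) (hne : ∀ i, τ i ≠ 1)
    {a b : Fin m × Bool} (hab : a.1 = b.1 → a.2 = b.2) :
    2 * cancelLength (tupleLetter τ a) (tupleLetter τ b) ≤ norm (tupleLetter τ a) ∧
      2 * cancelLength (tupleLetter τ a) (tupleLetter τ b) ≤ norm (tupleLetter τ b) := by
  by_cases h : a.1 = b.1
  · obtain rfl : a = b := Prod.ext h (hab h)
    have := two_mul_cancelLength_self_lt (tupleLetter_ne_one hne a)
    exact ⟨this.le, this.le⟩
  · have h₁ := norm_le_of_complexity_le (hτ.complexity_le_mul_left h)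
    have h₂ := norm_le_of_complexity_le (hτ.complexity_le_mul_right h)
    have := norm_mul_add_two_mul_cancelLength (tupleLetter τ a) (tupleLetter τ b)
    omega

theorem wordRank_take_le (hτ : IsNielsenMinimal τ) (hne : ∀ i, τ i ≠ 1)
    {a b : Fin m × Bool} (hab : a.1 = b.1 → a.2 = b.2)
    (h : norm (tupleLetter τ b) = 2 * cancelLength (tupleLetter τ a) (tupleLetter τ b)) :
    wordRank ((tupleLetter τ b).toWord.take (norm (tupleLetter τ b) / 2)) ≤
      wordRank ((tupleLetter τ b)⁻¹.toWord.take (norm (tupleLetter τ b) / 2)) := by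
  have hne' : a.1 ≠ b.1 := by
    intro h'
    obtain rfl : a = b := Prod.ext h' (hab h')
    exact (two_mul_cancelLength_self_lt (tupleLetter_ne_one hne a)).ne' h
  have := wordRank_take_le_of_complexity_le h (hτ.two_mul_cancelLength_le hne hab).1
    (hτ.complexity_le_mul_left hne')
  rwa [h, Nat.mul_div_cancel_left _ two_pos]

theorem cancelLength_add_lt (hτ : IsNielsenMinimal τ) (hne : ∀ i, τ i ≠ 1)
    {a b c : Fin m × Bool} (hab : a.1 = b.1 → a.2 = b.2) (hbc : b.1 = c.1 → b.2 = c.2) :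
    cancelLength (tupleLetter τ a) (tupleLetter τ b) +
      cancelLength (tupleLetter τ b) (tupleLetter τ c) < norm (tupleLetter τ b) := by
  have h₁ := (hτ.two_mul_cancelLength_le hne hab).2
  have h₂ := (hτ.two_mul_cancelLength_le hne hbc).1
  by_contra! h
  have r₁ := hτ.wordRank_take_le hne hab (by omega)
  have r₂ := hτ.wordRank_take_le hne (a := (c.1, !c.2)) (b := (b.1, !b.2))
    (fun h ↦ by simp [hbc h.symm])
    (by
      rw [tupleLetter_not, tupleLetter_not, cancelLength_inv_inv, norm_inv_eq]
      change norm (tupleLetter τ b) = 2 * cancelLength (tupleLetter τ b) (tupleLetter τ c)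
      omega)
  rw [tupleLetter_not, norm_inv_eq, inv_inv] at r₂
  set y := tupleLetter τ b with hy
  have htake := wordRank_injOn (by simp) (le_antisymm r₁ r₂)
  refine tupleLetter_ne_one hne b (eq_one_of_prefix_eq (p := y.toWord.take (norm y / 2))
    (s := y⁻¹.toWord.drop (norm y / 2)) (t := y.toWord.drop (norm y / 2)) ?_ ?_ ?_)
  · rw [htake, List.take_append_drop]
  · rw [List.take_append_drop]
  · rw [List.length_take_of_le (show norm y / 2 ≤ y.toWord.length from Nat.div_le_self _ _), ← hy]
    omega

theorem length_le_norm_lift (hτ : IsNielsenMinimal τ) (hne : ∀ i, τ i ≠ 1)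
    (x : FreeGroup (Fin m)) : norm x ≤ norm (FreeGroup.lift τ x) := by
  rw [lift_eq_prod_tupleLetter]
  refine length_le_norm_prod (R := fun a b : Fin m × Bool ↦ a.1 = b.1 → a.2 = b.2)
    (fun _ _ ↦ rfl) ?_ (fun a b c ↦ hτ.cancelLength_add_lt hne) _
    (isReduced_toWord (x := x))
  intro a b hab
  have := hτ.two_mul_cancelLength_le hne hab
  have ha := mt FreeGroup.norm_eq_zero.1 (tupleLetter_ne_one hne a)
  have hb := mt FreeGroup.norm_eq_zero.1 (tupleLetter_ne_one hne b)
  omega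

end IsNielsenMinimal

theorem nielsenEquiv_of_of_isNielsenMinimal {τ : Fin m → FreeGroup (Fin m)}
    (hτ : IsNielsenMinimal τ) (β : MulAut (FreeGroup (Fin m)))
    (hβ : ∀ i, τ i = β (FreeGroup.of i)) : NielsenEquiv FreeGroup.of τ := by
  have hne : ∀ i, τ i ≠ 1 := fun i ↦ by simp [hβ, FreeGroup.of_ne_one]
  have hlift : FreeGroup.lift τ = β.toMonoidHom := FreeGroup.ext_hom _ _ fun i ↦ by simp [hβ]
  have key : ∀ k, ∃ i, τ i = FreeGroup.of k ∨ τ i = (FreeGroup.of k)⁻¹ := by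
    intro k
    have hk : FreeGroup.lift τ (β.symm (FreeGroup.of k)) = FreeGroup.of k := by
      rw [hlift]; exact β.apply_symm_apply _
    have hle := hτ.length_le_norm_lift hne (β.symm (FreeGroup.of k))
    rw [hk, norm_of] at hle
    rw [lift_eq_prod_tupleLetter] at hk
    rw [FreeGroup.norm] at hle
    rcases hL : (β.symm (FreeGroup.of k)).toWord with _ | ⟨⟨i, b⟩, _ | ⟨c, L⟩⟩
    · rw [hL] at hk
      exact absurd hk.symm (FreeGroup.of_ne_one k)
    · refine ⟨i, ?_⟩
      rw [hL] at hk
      cases b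
      · exact .inr (by simpa [tupleLetter, inv_eq_iff_eq_inv] using hk)
      · exact .inl (by simpa [tupleLetter] using hk)
    · simp [hL] at hle
  choose e he using key
  have hinj : Injective e := by
    intro k l hkl
    have hk := he k
    have hl := he l
    rw [← hkl] at hl
    have : (FreeGroup.of k : FreeGroup (Fin m)) = FreeGroup.of l ∨
        FreeGroup.of k = (FreeGroup.of l)⁻¹ := by
      rcases hk with hk | hk <;> rcases hl with hl | hl <;> rw [hk] at hl
      · exact .inl hl
      · exact .inr hl
      · exact .inr (inv_eq_iff_eq_inv.1 hl)
      · exact .inl (inv_injective hl)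
    rcases this with h | h
    · exact FreeGroup.of_injective h
    · have := congrArg toWord h
      simp [toWord_inv, toWord_of, invRev] at this
  let σ : Equiv.Perm (Fin m) := Equiv.ofBijective e (Finite.injective_iff_bijective.1 hinj)
  have h₁ : NielsenEquiv FreeGroup.of (τ ∘ σ) := .of_eq_or_eq_inv he
  have h₂ := NielsenEquiv.comp_perm (τ ∘ σ) σ⁻¹
  have h₃ : (τ ∘ σ) ∘ ⇑σ⁻¹ = τ := by ext k : 1; simp
  rw [h₃] at h₂
  exact h₁.trans h₂

/-- Nielsen's theorem: every basis of a free group of finite rank is Nielsen-equivalent to the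
standard one. -/
theorem nielsenEquiv_of_aut (α : MulAut (FreeGroup (Fin m))) :
    NielsenEquiv FreeGroup.of fun i : Fin m ↦ α (FreeGroup.of i) := by
  obtain ⟨σ, hσ, hmin⟩ := exists_nielsenEquiv_isNielsenMinimal fun i ↦ α (FreeGroup.of i)
  obtain ⟨β, hβ⟩ := hσ.exists_aut
  refine (nielsenEquiv_of_of_isNielsenMinimal hmin (α * β) fun i ↦ ?_).trans hσ.symm
  rw [hβ, show FreeGroup.lift (fun i ↦ α (FreeGroup.of i)) = α.toMonoidHom from
    FreeGroup.ext_hom _ _ fun i ↦ by simp]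
  rfl

end Nielsen

/-- Two `m`-tuples are Nielsen-equivalent in `G` iff they are related by an
automorphism of the free group of rank `m`. -/
theorem nielsenEquiv_iff_exists_aut {G : Type*} [Group G] {m : ℕ} (hm : 1 ≤ m)
    (τ τ' : Fin m → G) :
    NielsenEquiv τ τ' ↔
      ∃ α : MulAut (FreeGroup (Fin m)),
        ∀ i, τ' i = FreeGroup.lift τ (α (FreeGroup.of i)) := by
  refine ⟨NielsenEquiv.exists_aut, fun ⟨α, hα⟩ ↦ ?_⟩
  have := (nielsenEquiv_of_aut α).map (FreeGroup.lift τ)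
  convert this using 1
  · ext i; simp
  · ext i; exact hα i
end

section
/- Let m > 1, F = FreeGroup (Fin m) with free basis x_i = FreeGroup.of i, and let r, s ∈ F. Let G = F/⟪r⟫ with quotient homomorphism π : F → G. Suppose G has the Nielsen uniqueness property: every m-tuple of elements of G that generates G is Nielsen-equivalent in G to the tuple (π(x_1),...,π(x_m)). Then G is isomorphic to F/⟪s⟫ if and only if there exists an automorphism α of F such that α(s) = r or α(s) = r^{-1}. -/
namespace OneRelator

open Subgroup

/-- The subgroup of a free group generated by the letters in `S`. -/
def supported {α : Type*} (S : Set α) : Subgroup (FreeGroup α) :=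
  closure (FreeGroup.of '' S)

/-- The letter `x` is essential in `r` if no conjugate of `r` avoids `x`. -/
def IsEssential {α : Type*} (r : FreeGroup α) (x : α) : Prop :=
  ∀ h ∈ supported {x}ᶜ, ¬ IsConj r h

/-- The letters other than `x` freely generate a subgroup of the one-relator group with
relator `r`. -/
def OthersFree {α : Type*} (r : FreeGroup α) (x : α) : Prop :=
  ∀ h ∈ supported {x}ᶜ, h ∈ normalClosure {r} → h = 1

section Supported

variable {α : Type*} {G : Type*} [Group G]

lemma of_mem_supported {S : Set α} {x : α} (hx : x ∈ S) : FreeGroup.of x ∈ supported S :=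
  subset_closure ⟨x, hx, rfl⟩

lemma supported_mono {S T : Set α} (h : S ⊆ T) : supported S ≤ supported T :=
  closure_mono (Set.image_mono h)

lemma supported_le {S : Set α} {H : Subgroup (FreeGroup α)}
    (h : ∀ x ∈ S, FreeGroup.of x ∈ H) : supported S ≤ H := by
  rw [supported, closure_le]
  rintro _ ⟨x, hx, rfl⟩
  exact h x hx

lemma eq_of_mem_supported {S : Set α} {f g : FreeGroup α →* G}
    (h : ∀ x ∈ S, f (FreeGroup.of x) = g (FreeGroup.of x)) {w : FreeGroup α}
    (hw : w ∈ supported S) : f w = g w :=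
  supported_le (H := f.eqLocus g) h hw

lemma mk_mem_supported {S : Set α} {L : List (α × Bool)} (h : ∀ p ∈ L, p.1 ∈ S) :
    FreeGroup.mk L ∈ supported S := by
  rw [← MonoidHom.id_apply (FreeGroup α) (FreeGroup.mk L), ← FreeGroup.lift_of_eq_id,
    FreeGroup.lift_mk]
  refine list_prod_mem fun y hy => ?_
  obtain ⟨⟨x, b⟩, hp, rfl⟩ := List.mem_map.1 hy
  have := of_mem_supported (h _ hp)
  cases b
  · exact inv_mem this
  · exact this

lemma normalClosure_singleton_of_isConj {a b : G} (h : IsConj a b) :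
    normalClosure {a} = normalClosure {b} := by
  obtain ⟨c, rfl⟩ := isConj_iff.1 h
  apply le_antisymm <;> apply normalClosure_le_normal <;> rw [Set.singleton_subset_iff]
  · have := normalClosure_normal.conj_mem _
      (subset_normalClosure (Set.mem_singleton (c * a * c⁻¹))) c⁻¹
    simpa [mul_assoc] using this
  · exact normalClosure_normal.conj_mem _ (subset_normalClosure (Set.mem_singleton a)) c

lemma map_mem_normalClosure {H : Type*} [Group H] (f : G →* H) {s : Set G} {t : Set H}
    (hst : ∀ x ∈ s, f x ∈ normalClosure t) {x : G} (hx : x ∈ normalClosure s) :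
    f x ∈ normalClosure t :=
  normalClosure_le_normal (N := (normalClosure t).comap f) hst hx

open Classical in
/-- The homomorphism deleting all occurrences of a letter. -/
noncomputable def delete (x : α) : FreeGroup α →* FreeGroup α :=
  FreeGroup.lift fun y => if y = x then 1 else FreeGroup.of y

lemma delete_eq_self {x : α} {w : FreeGroup α} (hw : w ∈ supported {x}ᶜ) :
    delete x w = w :=
  eq_of_mem_supported (g := MonoidHom.id _) (fun y hy => by
    simp only [delete, FreeGroup.lift_apply_of, MonoidHom.id_apply]
    exact if_neg hy) hw

open Classical in
lemma delete_mk (x : α) (L : List (α × Bool)) :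
    delete x (FreeGroup.mk L) = FreeGroup.mk (L.filter fun p => p.1 ≠ x) := by
  induction L with
  | nil => simp [← FreeGroup.one_eq_mk]
  | cons p L ih =>
    obtain ⟨y, b⟩ := p
    rw [← List.singleton_append, ← FreeGroup.mul_mk, map_mul, ih, List.filter_append,
      ← FreeGroup.mul_mk]
    congr 1
    by_cases hy : y = x <;> cases b <;>
      simp [delete, FreeGroup.lift_mk, hy, FreeGroup.of, FreeGroup.inv_mk, FreeGroup.invRev,
        ← FreeGroup.one_eq_mk]

lemma exists_isConj_forall_isEssential (L : List (α × Bool)) :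
    ∃ L' : List (α × Bool), L'.length ≤ L.length ∧
      IsConj (FreeGroup.mk L) (FreeGroup.mk L') ∧
      ∀ p ∈ L', IsEssential (FreeGroup.mk L') p.1 := by
  classical
  induction hn : L.length using Nat.strong_induction_on generalizing L with
  | _ n ih =>
    by_cases hL : ∀ p ∈ L, IsEssential (FreeGroup.mk L) p.1
    · exact ⟨L, hn.le, IsConj.refl _, hL⟩
    · simp only [IsEssential, not_forall, not_not] at hL
      obtain ⟨p, hp, h, hh, hconj⟩ := hL
      have hlt : (L.filter fun q => q.1 ≠ p.1).length < L.length := by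
        refine lt_of_le_of_ne (List.length_filter_le _ _) fun heq => ?_
        have := List.length_filter_eq_length_iff.1 heq p hp
        simp at this
      obtain ⟨L', hlen, hc, he⟩ := ih _ (hn ▸ hlt) _ rfl
      refine ⟨L', hlen.trans (hn ▸ hlt.le), ?_, he⟩
      have h2 := (delete p.1).map_isConj hconj
      rw [delete_eq_self hh, delete_mk] at h2
      exact (hconj.trans h2.symm).trans hc

/-- Normal closures in an amalgamated product: adding a relator `r` that involves a new letter `e`
and letters of `A` adds no relation between the old letters, provided that `A` is free
in both factors. -/
lemma mem_normalClosure_of_mem_insert {R : Set (FreeGroup α)} {r : FreeGroup α} {A : Set α}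
    {e : α} (hR : ∀ w ∈ R, w ∈ supported {e}ᶜ) (hr : r ∈ supported (insert e A))
    (hAR : ∀ h ∈ supported A, h ∈ normalClosure R → h = 1)
    (hAr : ∀ h ∈ supported A, h ∈ normalClosure {r} → h = 1)
    {h : FreeGroup α} (hh : h ∈ supported {e}ᶜ) (hmem : h ∈ normalClosure (insert r R)) :
    h ∈ normalClosure R := by
  classical
  let rels : Bool → Set (FreeGroup α) := fun b => cond b R {r}
  let φ : ∀ b, supported A →* FreeGroup α ⧸ normalClosure (rels b) := fun b =>
    (QuotientGroup.mk' _).comp (supported A).subtype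
  have hφ : ∀ b, Function.Injective (φ b) := by
    intro b
    rw [injective_iff_map_eq_one]
    rintro ⟨w, hw⟩ h1
    have h2 : w ∈ normalClosure (rels b) := (QuotientGroup.eq_one_iff w).1 h1
    cases b
    · exact Subtype.ext (hAr w hw h2)
    · exact Subtype.ext (hAR w hw h2)
  let g : ∀ b, FreeGroup α →* Monoid.PushoutI φ := fun b =>
    (Monoid.PushoutI.of b).comp (QuotientGroup.mk' (normalClosure (rels b)))
  have hg : ∀ b, ∀ w ∈ rels b, g b w = 1 := fun b w hw => by
    have : QuotientGroup.mk' (normalClosure (rels b)) w = 1 :=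
      (QuotientGroup.eq_one_iff w).2 (subset_normalClosure hw)
    rw [MonoidHom.comp_apply, this, map_one]
  have hgA : ∀ x ∈ A, g true (FreeGroup.of x) = g false (FreeGroup.of x) := fun x hx =>
    (Monoid.PushoutI.of_apply_eq_base φ true ⟨_, of_mem_supported hx⟩).trans
      (Monoid.PushoutI.of_apply_eq_base φ false ⟨_, of_mem_supported hx⟩).symm
  let f : FreeGroup α →* Monoid.PushoutI φ :=
    FreeGroup.lift fun x => if x = e then g false (FreeGroup.of x) else g true (FreeGroup.of x)
  have hf1 : ∀ w ∈ supported {e}ᶜ, f w = g true w := fun w hw =>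
    eq_of_mem_supported (fun x hx => by
      simp only [f, FreeGroup.lift_apply_of]
      exact if_neg hx) hw
  have hf2 : ∀ w ∈ supported (insert e A), f w = g false w := fun w hw =>
    eq_of_mem_supported (fun x hx => by
      simp only [f, FreeGroup.lift_apply_of]
      split_ifs with hxe
      · rfl
      · exact hgA x (hx.resolve_left hxe)) hw
  have hker : f h = 1 := by
    refine normalClosure_le_normal (N := f.ker) ?_ hmem
    rintro w (rfl | hw)
    · exact (hf2 w hr).trans (hg false w rfl)
    · exact (hf1 w (hR w hw)).trans (hg true w hw)
  rw [hf1 h hh] at hker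
  refine (QuotientGroup.eq_one_iff h).1 (Monoid.PushoutI.of_injective hφ true ?_)
  rw [map_one]
  exact hker

end Supported

section Shift

variable {α : Type*}

/-- The action of `ℤ` on the free group on `ℤ × α` by translation of the levels of letters. -/
def shiftHom (α : Type*) : Multiplicative ℤ →* MulAut (FreeGroup (ℤ × α)) where
  toFun c := FreeGroup.freeGroupCongr ((Equiv.addRight c.toAdd).prodCongr (Equiv.refl α))
  map_one' := by
    apply MulEquiv.toMonoidHom_injective
    ext p
    simp
  map_mul' c d := by
    apply MulEquiv.toMonoidHom_injective
    ext ⟨k, x⟩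
    simp [add_assoc, add_comm c.toAdd]

/-- Translation of the levels of all letters by `c`. -/
def shift (c : ℤ) : MulAut (FreeGroup (ℤ × α)) := shiftHom α (Multiplicative.ofAdd c)

@[simp] lemma shift_of (c k : ℤ) (x : α) :
    shift c (FreeGroup.of (k, x)) = FreeGroup.of (k + c, x) := by
  simp [shift, shiftHom]

@[simp] lemma shift_zero (w : FreeGroup (ℤ × α)) : shift 0 w = w := by
  simp [shift]

lemma shift_shift (c d : ℤ) (w : FreeGroup (ℤ × α)) : shift c (shift d w) = shift (c + d) w := by
  simp [shift, ofAdd_add]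

lemma shift_mk (c : ℤ) (L : List ((ℤ × α) × Bool)) :
    shift c (FreeGroup.mk L) = FreeGroup.mk (L.map fun p => ((p.1.1 + c, p.1.2), p.2)) := rfl

lemma shift_mem_supported {c : ℤ} {S T : Set (ℤ × α)} (h : ∀ p ∈ S, (p.1 + c, p.2) ∈ T)
    {w : FreeGroup (ℤ × α)} (hw : w ∈ supported S) : shift c w ∈ supported T :=
  supported_le (H := (supported T).comap (shift c).toMonoidHom) (fun p hp => by
    rw [mem_comap]
    change shift c (FreeGroup.of (p.1, p.2)) ∈ _
    rw [shift_of]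
    exact of_mem_supported (h p hp)) hw

lemma othersFree_shift {ρ : FreeGroup (ℤ × α)} {k : ℤ} {a : α} (h : OthersFree ρ (k, a)) (c : ℤ) :
    OthersFree (shift c ρ) (k + c, a) := by
  intro w hw hmem
  have h1 : shift (-c) w ∈ normalClosure {ρ} := by
    refine map_mem_normalClosure (shift (-c)).toMonoidHom (fun x hx => ?_) hmem
    rw [Set.mem_singleton_iff.1 hx]
    change shift (-c) (shift c ρ) ∈ _
    rw [shift_shift, neg_add_cancel, shift_zero]
    exact subset_normalClosure rfl
  have h2 : shift (-c) w ∈ supported {(k, a)}ᶜ := by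
    refine shift_mem_supported (S := {(k + c, a)}ᶜ) ?_ hw
    intro p hp hp'
    refine hp ?_
    have h3 := (Prod.mk.inj hp').1
    exact Prod.ext (by simp only; omega) (Prod.mk.inj hp').2
  simpa using h _ h2 h1

/-- The letters `(k, x)` such that `m ≤ k ≤ M` in case `x = a`. -/
def window (a : α) (m M : ℤ) : Set (ℤ × α) := {p | p.2 = a → m ≤ p.1 ∧ p.1 ≤ M}

/-- The translates of `ρ` by the elements of `C`. -/
def translates (ρ : FreeGroup (ℤ × α)) (C : Set ℤ) : Set (FreeGroup (ℤ × α)) :=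
  (fun c => shift c ρ) '' C

variable {ρ : FreeGroup (ℤ × α)} {a : α} {m M : ℤ}

lemma mem_normalClosure_translates_erase (hρ : ρ ∈ supported (window a m M)) (hmM : m ≤ M)
    {C : Finset ℤ} {c j : ℤ} (hc : c ∈ C) (hfree : OthersFree ρ (j, a))
    (hj : (j = M ∧ ∀ d ∈ C, d ≤ c) ∨ (j = m ∧ ∀ d ∈ C, c ≤ d))
    (hwin : ∀ p q, q < p + (M - m) → ∀ h ∈ supported (window a p q),
      h ∈ normalClosure (translates ρ (C.erase c)) → h = 1)
    {h : FreeGroup (ℤ × α)} (hh : h ∈ supported {(j + c, a)}ᶜ)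
    (hmem : h ∈ normalClosure (translates ρ C)) :
    h ∈ normalClosure (translates ρ (C.erase c)) := by
  have hins : translates ρ C = insert (shift c ρ) (translates ρ (C.erase c)) := by
    conv_lhs => rw [← Finset.insert_erase hc, Finset.coe_insert]
    exact Set.image_insert_eq
  rw [hins] at hmem
  obtain ⟨p, q, hpq, hp⟩ : ∃ p q, q < p + (M - m) ∧
      ∀ k, m + c ≤ k → k ≤ M + c → k ≠ j + c → p ≤ k ∧ k ≤ q := by
    rcases hj with ⟨rfl, -⟩ | ⟨rfl, -⟩
    · exact ⟨m + c, j + c - 1, by omega, fun k _ _ _ => by omega⟩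
    · exact ⟨j + c + 1, M + c, by omega, fun k _ _ _ => by omega⟩
  refine mem_normalClosure_of_mem_insert (A := window a p q \ {(j + c, a)}) ?_ ?_ ?_ ?_ hh hmem
  · rintro _ ⟨d, hd, rfl⟩
    obtain ⟨hdc, hd⟩ := Finset.mem_erase.1 (Finset.mem_coe.1 hd)
    refine shift_mem_supported (fun x hx hx' => ?_) hρ
    have h1 := (Prod.mk.inj hx').1
    have h2 := hx (Prod.mk.inj hx').2
    rcases hj with ⟨rfl, hj⟩ | ⟨rfl, hj⟩ <;> have := hj d hd <;> omega
  · refine shift_mem_supported (fun x hx => ?_) hρ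
    by_cases hxe : (x.1 + c, x.2) = (j + c, a)
    · exact Or.inl hxe
    · refine Or.inr ⟨fun hxa => ?_, hxe⟩
      have := hx hxa
      exact hp _ (by simp; omega) (by simp; omega) fun h0 => hxe (Prod.ext h0 hxa)
  · exact fun w hw => hwin p q hpq w (supported_mono Set.sdiff_subset hw)
  · exact fun w hw => othersFree_shift hfree c w (supported_mono (fun x hx => hx.2) hw)

lemma eq_one_of_mem_supported_window (hρ : ρ ∈ supported (window a m M)) (hmM : m ≤ M)
    (hm : OthersFree ρ (m, a)) (hM : OthersFree ρ (M, a)) (C : Finset ℤ) :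
    ∀ p q, q < p + (M - m) → ∀ h ∈ supported (window a p q),
      h ∈ normalClosure (translates ρ C) → h = 1 := by
  induction C using Finset.strongInduction with
  | H C ih =>
    intro p q hpq h hh hmem
    rcases C.eq_empty_or_nonempty with rfl | hne
    · simpa [translates] using hmem
    · by_cases hq : M + C.max' hne ≤ q
      · have hc := C.min'_mem hne
        have := C.min'_le_max' hne
        refine ih _ (Finset.erase_ssubset hc) p q hpq h hh ?_
        refine mem_normalClosure_translates_erase hρ hmM hc hm
          (Or.inr ⟨rfl, fun d hd => C.min'_le d hd⟩) (ih _ (Finset.erase_ssubset hc))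
          (supported_mono (fun x hx hx' => ?_) hh) hmem
        rw [Set.mem_singleton_iff.1 hx'] at hx
        have := (hx rfl).1
        simp only at this
        omega
      · have hc := C.max'_mem hne
        refine ih _ (Finset.erase_ssubset hc) p q hpq h hh ?_
        refine mem_normalClosure_translates_erase hρ hmM hc hM
          (Or.inl ⟨rfl, fun d hd => C.le_max' d hd⟩) (ih _ (Finset.erase_ssubset hc))
          (supported_mono (fun x hx hx' => ?_) hh) hmem
        rw [Set.mem_singleton_iff.1 hx'] at hx
        have := (hx rfl).2
        simp only at this
        omega

lemma exists_finset_mem_normalClosure_translates {h : FreeGroup (ℤ × α)}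
    (hmem : h ∈ normalClosure (translates ρ Set.univ)) :
    ∃ C : Finset ℤ, h ∈ normalClosure (translates ρ C) := by
  classical
  have hmono : ∀ C D : Finset ℤ, C ⊆ D →
      normalClosure (translates ρ C) ≤ normalClosure (translates ρ D) := fun C D hCD =>
    normalClosure_mono (Set.image_mono (Finset.coe_subset.2 hCD))
  let N : Subgroup (FreeGroup (ℤ × α)) := {
    carrier := {h | ∃ C : Finset ℤ, h ∈ normalClosure (translates ρ C)}
    one_mem' := ⟨∅, one_mem _⟩
    mul_mem' := fun ⟨C, hC⟩ ⟨D, hD⟩ => ⟨C ∪ D, mul_mem (hmono _ _ Finset.subset_union_left hC)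
      (hmono _ _ Finset.subset_union_right hD)⟩
    inv_mem' := fun ⟨C, hC⟩ => ⟨C, inv_mem hC⟩ }
  have : N.Normal := ⟨fun w ⟨C, hC⟩ g => ⟨C, normalClosure_normal.conj_mem _ hC g⟩⟩
  refine normalClosure_le_normal (N := N) ?_ hmem
  rintro _ ⟨c, -, rfl⟩
  exact ⟨{c}, subset_normalClosure ⟨c, by simp, rfl⟩⟩

/-- A minimal set of translates of `ρ` needed for `h` is detected by the extremal letters `a`
of its extremal elements. -/
lemma exists_minimal_translates {h : FreeGroup (ℤ × α)}
    (hmem : h ∈ normalClosure (translates ρ Set.univ)) :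
    ∃ C : Finset ℤ, h ∈ normalClosure (translates ρ C) ∧
      ∀ (hne : C.Nonempty) (a : α) (m M : ℤ), ρ ∈ supported (window a m M) → m ≤ M →
        OthersFree ρ (m, a) → OthersFree ρ (M, a) →
        h ∉ supported {(M + C.max' hne, a)}ᶜ ∧ h ∉ supported {(m + C.min' hne, a)}ᶜ := by
  classical
  obtain ⟨C, hC, hmin⟩ := exists_minimalFor_of_wellFoundedLT
    (fun C : Finset ℤ => h ∈ normalClosure (translates ρ C)) Finset.card
    (exists_finset_mem_normalClosure_translates hmem)
  have hmin' : ∀ c ∈ C, h ∉ normalClosure (translates ρ (C.erase c)) := fun c hc hce => by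
    have := hmin hce (Finset.card_erase_lt_of_mem hc).le
    exact absurd (Finset.card_erase_lt_of_mem hc) this.not_gt
  refine ⟨C, hC, fun hne a m M hρ hmM hm hM => ⟨fun hh => ?_, fun hh => ?_⟩⟩
  · exact hmin' _ (C.max'_mem hne) (mem_normalClosure_translates_erase hρ hmM (C.max'_mem hne) hM
      (Or.inl ⟨rfl, fun d hd => C.le_max' d hd⟩)
      (eq_one_of_mem_supported_window hρ hmM hm hM _) hh hC)
  · exact hmin' _ (C.min'_mem hne) (mem_normalClosure_translates_erase hρ hmM (C.min'_mem hne) hm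
      (Or.inr ⟨rfl, fun d hd => C.min'_le d hd⟩)
      (eq_one_of_mem_supported_window hρ hmM hm hM _) hh hC)

end Shift

section Levels

variable {α : Type*}

open Classical in
/-- The infinite cyclic cover of the free group determined by `φ`: a word starting at level `0` is
rewritten in letters indexed by the level at which they are read, omitting the letter `t`. -/
noncomputable def levels (t : α) (φ : α → ℤ) :
    FreeGroup α →* FreeGroup (ℤ × α) ⋊[shiftHom α] Multiplicative ℤ :=
  FreeGroup.lift fun x => ⟨if x = t then 1 else FreeGroup.of (0, x), Multiplicative.ofAdd (φ x)⟩

open Classical in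
/-- A homomorphism which recovers a word of level zero from its rewriting by `levels t φ`. -/
noncomputable def unlevel (t : α) (φ : α → ℤ) : FreeGroup (ℤ × α) →* FreeGroup α :=
  FreeGroup.lift fun p => if p.2 = t then 1 else
    FreeGroup.of t ^ (p.1 / φ t) * FreeGroup.of p.2 * FreeGroup.of t ^ (-((p.1 + φ p.2) / φ t))

open Classical in
/-- The exponent sum of a letter, written multiplicatively. -/
noncomputable def exponentSum (x : α) : FreeGroup α →* Multiplicative ℤ :=
  FreeGroup.lift fun y => if y = x then Multiplicative.ofAdd 1 else 1

variable {t : α} {φ : α → ℤ}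

lemma shift_mul_left (k : ℤ) (g h : FreeGroup (ℤ × α) ⋊[shiftHom α] Multiplicative ℤ) :
    shift k (g * h).left = shift k g.left * shift (k + g.right.toAdd) h.left := by
  rw [SemidirectProduct.mul_left, map_mul, ← shift_shift]
  rfl

lemma shift_inv_left (k : ℤ) (g : FreeGroup (ℤ × α) ⋊[shiftHom α] Multiplicative ℤ) :
    shift k g⁻¹.left = (shift (k - g.right.toAdd) g.left)⁻¹ := by
  rw [SemidirectProduct.inv_left, ← map_inv, sub_eq_add_neg, ← shift_shift]
  rfl

lemma unlevel_shift_levels (ht : φ t ≠ 0) (w : FreeGroup α) : ∀ k : ℤ,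
    unlevel t φ (shift k (levels t φ w).left) = FreeGroup.of t ^ (k / φ t) * w *
      FreeGroup.of t ^ (-((k + (levels t φ w).right.toAdd) / φ t)) := by
  induction w using FreeGroup.induction_on with
  | C1 => simp
  | of x =>
    intro k
    by_cases hx : x = t
    · subst hx
      simp only [levels, FreeGroup.lift_apply_of, if_true, map_one, toAdd_ofAdd]
      rw [Int.add_ediv_of_dvd_right dvd_rfl, Int.ediv_self ht, zpow_neg, zpow_add, zpow_one]
      group
    · simp [levels, unlevel, hx]
  | inv_of x ih =>
    intro k
    simp only [map_inv, shift_inv_left, ih, SemidirectProduct.inv_right, toAdd_inv]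
    rw [sub_add_cancel, ← sub_eq_add_neg]
    group
  | mul v w hv hw =>
    intro k
    simp only [map_mul, shift_mul_left, hv, hw, SemidirectProduct.mul_right, toAdd_mul]
    rw [← add_assoc]
    group

lemma unlevel_levels (ht : φ t ≠ 0) {w : FreeGroup α} (hw : (levels t φ w).right = 1) :
    unlevel t φ (levels t φ w).left = w := by
  simpa [hw] using unlevel_shift_levels ht w 0

lemma isConj_unlevel_shift_levels (ht : φ t ≠ 0) {w : FreeGroup α}
    (hw : (levels t φ w).right = 1) (k : ℤ) :
    IsConj w (unlevel t φ (shift k (levels t φ w).left)) := by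
  rw [unlevel_shift_levels ht, hw, isConj_iff]
  exact ⟨FreeGroup.of t ^ (k / φ t), by simp⟩

lemma levels_mem_normalClosure {r h : FreeGroup α} (hr : (levels t φ r).right = 1)
    (hh : h ∈ normalClosure {r}) : (levels t φ h).right = 1 ∧
      (levels t φ h).left ∈ normalClosure (translates (levels t φ r).left Set.univ) := by
  set N := normalClosure (translates (levels t φ r).left Set.univ) with hN
  have hinv : ∀ c, ∀ n ∈ N, shift c n ∈ N := fun c n hn => by
    refine map_mem_normalClosure (shift c).toMonoidHom ?_ hn
    rintro _ ⟨d, -, rfl⟩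
    exact subset_normalClosure ⟨c + d, trivial, (shift_shift c d _).symm⟩
  let K : Subgroup (FreeGroup α) := {
    carrier := {h | (levels t φ h).right = 1 ∧ (levels t φ h).left ∈ N}
    one_mem' := by simp
    mul_mem' := by
      rintro v w ⟨hv, hv'⟩ ⟨hw, hw'⟩
      simp only [Set.mem_ofPred_eq, map_mul, SemidirectProduct.mul_right,
        SemidirectProduct.mul_left, hv, hw, map_one, mul_one, MulAut.one_apply, true_and]
      exact mul_mem hv' hw'
    inv_mem' := by
      rintro v ⟨hv, hv'⟩
      simp only [Set.mem_ofPred_eq, map_inv, SemidirectProduct.inv_right,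
        SemidirectProduct.inv_left, hv, inv_one, map_one, MulAut.one_apply, true_and]
      exact inv_mem hv' }
  have hK : K.Normal := by
    refine ⟨fun v ⟨hv, hv'⟩ g => ⟨by simp [hv], ?_⟩⟩
    have h1 : (levels t φ (g * v * g⁻¹)).left = (levels t φ g).left *
        shift (levels t φ g).right.toAdd (levels t φ v).left * (levels t φ g).left⁻¹ := by
      simp [hv, shift]
    rw [h1]
    exact normalClosure_normal.conj_mem _ (hinv _ _ hv') _
  refine normalClosure_le_normal (N := K) (Set.singleton_subset_iff.2 ⟨hr, ?_⟩) hh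
  exact subset_normalClosure ⟨0, trivial, shift_zero _⟩

lemma normalClosure_translates_of_isConj {ρ σ : FreeGroup (ℤ × α)} (h : IsConj ρ σ) (C : Set ℤ) :
    normalClosure (translates ρ C) ≤ normalClosure (translates σ C) := by
  refine normalClosure_le_normal ?_
  rintro _ ⟨c, hc, rfl⟩
  have h1 : shift c ρ ∈ normalClosure {shift c σ} := by
    have h2 : IsConj (shift c ρ) (shift c σ) := (shift c).toMonoidHom.map_isConj h
    rw [← normalClosure_singleton_of_isConj h2]
    exact subset_normalClosure rfl
  exact normalClosure_mono (Set.singleton_subset_iff.2 (Set.mem_image_of_mem _ hc)) h1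

open Classical in
lemma exists_mk_eq_shift_levels (L : List (α × Bool)) : ∀ k : ℤ,
    ∃ L' : List ((ℤ × α) × Bool), L'.length ≤ (L.filter fun p => p.1 ≠ t).length ∧
      FreeGroup.mk L' = shift k (levels t φ (FreeGroup.mk L)).left := by
  induction L with
  | nil => exact fun k => ⟨[], le_rfl, by simp [← FreeGroup.one_eq_mk]⟩
  | cons p L ih =>
    intro k
    obtain ⟨L₁, hlen, hL₁⟩ : ∃ L₁ : List ((ℤ × α) × Bool),
        L₁.length ≤ ([p].filter fun p => p.1 ≠ t).length ∧
          FreeGroup.mk L₁ = shift k (levels t φ (FreeGroup.mk [p])).left := by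
      obtain ⟨x, b⟩ := p
      cases b
      · have h1 : FreeGroup.mk [(x, false)] = (FreeGroup.of x)⁻¹ := rfl
        by_cases hx : x = t
        · exact ⟨[], by simp, by rw [h1, map_inv, shift_inv_left]; simp [levels, hx,
            ← FreeGroup.one_eq_mk]⟩
        · refine ⟨[((k - φ x, x), false)], by simp [hx], ?_⟩
          rw [h1, map_inv, shift_inv_left]
          simp [levels, hx, FreeGroup.of, FreeGroup.inv_mk, FreeGroup.invRev, shift_mk]
      · have h1 : FreeGroup.mk [(x, true)] = FreeGroup.of x := rfl
        by_cases hx : x = t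
        · exact ⟨[], by simp, by rw [h1]; simp [levels, hx, ← FreeGroup.one_eq_mk]⟩
        · refine ⟨[((k, x), true)], by simp [hx], ?_⟩
          rw [h1]
          simp [levels, hx, FreeGroup.of, shift_mk]
    obtain ⟨L₂, hlen₂, hL₂⟩ := ih (k + (levels t φ (FreeGroup.mk [p])).right.toAdd)
    refine ⟨L₁ ++ L₂, ?_, ?_⟩
    · rw [← List.singleton_append, List.filter_append, List.length_append, List.length_append]
      exact add_le_add hlen hlen₂
    · rw [← FreeGroup.mul_mk, hL₁, hL₂, ← shift_mul_left, ← map_mul, FreeGroup.mul_mk,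
        List.singleton_append]

lemma exists_essential_levels {L : List (α × Bool)} (ht : t ∈ L.map Prod.fst) (φ : α → ℤ) :
    ∃ L' : List ((ℤ × α) × Bool), L'.length < L.length ∧
      IsConj (levels t φ (FreeGroup.mk L)).left (FreeGroup.mk L') ∧
      ∀ p ∈ L', IsEssential (FreeGroup.mk L') p.1 := by
  classical
  obtain ⟨p, hp, rfl⟩ := List.mem_map.1 ht
  obtain ⟨L₁, hlen, hL₁⟩ := exists_mk_eq_shift_levels (t := p.1) (φ := φ) L 0
  obtain ⟨L', hlen', hc, he⟩ := exists_isConj_forall_isEssential L₁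
  rw [hL₁, shift_zero] at hc
  refine ⟨L', (hlen'.trans hlen).trans_lt ?_, hc, he⟩
  refine lt_of_le_of_ne (List.length_filter_le _ _) fun heq => ?_
  have := List.length_filter_eq_length_iff.1 heq p hp
  simp at this

lemma levels_left_mem_supported {S : Set α} {w : FreeGroup α} (hw : w ∈ supported S) :
    (levels t φ w).left ∈ supported {p : ℤ × α | p.2 ∈ S} := by
  let T : Set (ℤ × α) := {p | p.2 ∈ S}
  have hT : ∀ c, ∀ v ∈ supported T, shift c v ∈ supported T := fun c v hv =>
    shift_mem_supported (fun p hp => hp) hv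
  let K : Subgroup (FreeGroup α) := {
    carrier := {w | (levels t φ w).left ∈ supported T}
    one_mem' := by simp
    mul_mem' := fun {v w} hv hw => by
      have := shift_mul_left 0 (levels t φ v) (levels t φ w)
      rw [shift_zero, shift_zero] at this
      rw [Set.mem_ofPred_eq, map_mul, this]
      exact mul_mem hv (hT _ _ hw)
    inv_mem' := fun {v} hv => by
      have := shift_inv_left 0 (levels t φ v)
      rw [shift_zero] at this
      rw [Set.mem_ofPred_eq, map_inv, this]
      exact inv_mem (hT _ _ hv) }
  refine supported_le (H := K) (fun x hx => ?_) hw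
  change (levels t φ (FreeGroup.of x)).left ∈ supported T
  simp only [levels, FreeGroup.lift_apply_of]
  split_ifs
  · exact one_mem _
  · exact of_mem_supported hx

lemma exponentSum_levels {x : α} (hx : x ≠ t) (w : FreeGroup α) :
    exponentSum x (FreeGroup.map Prod.snd (levels t φ w).left) = exponentSum x w := by
  let e : FreeGroup (ℤ × α) →* Multiplicative ℤ := (exponentSum x).comp (FreeGroup.map Prod.snd)
  let f := (SemidirectProduct.lift (φ := shiftHom α) e (1 : Multiplicative ℤ →* Multiplicative ℤ)
    (fun c => by
      ext p
      simpa [e, shift] using congrArg e (shift_of c.toAdd p.1 p.2)))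
  have h1 : f.comp (levels t φ) = exponentSum x := by
    ext y
    by_cases hy : y = t
    · simp [f, levels, exponentSum, SemidirectProduct.lift, hy, hx.symm]
    · simp [f, levels, exponentSum, SemidirectProduct.lift, hy, e]
  refine Eq.trans ?_ (DFunLike.congr_fun h1 w)
  simp [f, SemidirectProduct.lift, e]

open Classical in
/-- The weight function which is `1` at `t` and `0` elsewhere. -/
noncomputable def unitWeight (t : α) : α → ℤ := fun y => if y = t then 1 else 0

lemma unitWeight_self_ne_zero (t : α) : unitWeight t t ≠ 0 := by simp [unitWeight]

lemma levels_right_eq_exponentSum (w : FreeGroup α) :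
    (levels t (unitWeight t) w).right = exponentSum t w := by
  have : SemidirectProduct.rightHom.comp (levels t (unitWeight t))
      = exponentSum t := by
    ext y
    by_cases hy : y = t <;> simp [levels, exponentSum, unitWeight, hy]
  exact DFunLike.congr_fun this w

lemma exists_levels_right_eq_one {x : α} (hx : x ≠ t) {w : FreeGroup α}
    (hw : exponentSum x w ≠ 1) : ∃ φ : α → ℤ, φ t ≠ 0 ∧ (levels t φ w).right = 1 := by
  classical
  let φ : α → ℤ := fun y => if y = t then (exponentSum x w).toAdd else
    if y = x then -(exponentSum t w).toAdd else 0
  refine ⟨φ, by simpa [φ] using hw, ?_⟩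
  have : SemidirectProduct.rightHom.comp (levels t φ)
      = (exponentSum t) ^ (exponentSum x w).toAdd * (exponentSum x) ^ (-(exponentSum t w).toAdd) := by
    ext y
    by_cases hy : y = t
    · subst hy
      simp [levels, exponentSum, φ, hx.symm, ← ofAdd_zsmul]
    · by_cases hyx : y = x
      · subst hyx
        simp [levels, exponentSum, φ, hy, ← ofAdd_zsmul]
      · simp [levels, exponentSum, φ, hy, hyx]
  refine (DFunLike.congr_fun this w).trans (Multiplicative.toAdd.injective ?_)
  simp [mul_comm]

end Levels

section Magnus

universe u

variable {α : Type u}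

lemma mk_mem_supported_letters (L : List (α × Bool)) :
    FreeGroup.mk L ∈ supported {x | x ∈ L.map Prod.fst} :=
  mk_mem_supported fun _ hp => List.mem_map_of_mem hp

lemma mem_letters_of_notMem_supported {L : List (α × Bool)} {x : α}
    (hx : FreeGroup.mk L ∉ supported {x}ᶜ) : x ∈ L.map Prod.fst := by
  by_contra hxL
  refine hx (mk_mem_supported fun p hp hpx => hxL ?_)
  rw [← Set.mem_singleton_iff.1 hpx]
  exact List.mem_map_of_mem hp

lemma mem_letters_of_isEssential {L : List (α × Bool)} {x : α}
    (hx : IsEssential (FreeGroup.mk L) x) : x ∈ L.map Prod.fst :=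
  mem_letters_of_notMem_supported fun h => hx _ h (IsConj.refl _)

lemma isEssential_of_mem_letters {L : List (α × Bool)}
    (h : ∀ p ∈ L, IsEssential (FreeGroup.mk L) p.1) :
    ∀ x ∈ L.map Prod.fst, IsEssential (FreeGroup.mk L) x := fun x hx => by
  obtain ⟨p, hp, rfl⟩ := List.mem_map.1 hx
  exact h p hp

lemma exists_window {L : List ((ℤ × α) × Bool)} {k : ℤ} {a : α} (h : (k, a) ∈ L.map Prod.fst) :
    ∃ m M : ℤ, m ≤ M ∧ (m, a) ∈ L.map Prod.fst ∧ (M, a) ∈ L.map Prod.fst ∧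
      ∀ q ∈ L.map Prod.fst, q ∈ window a m M := by
  have hfin : {j : ℤ | (j, a) ∈ L.map Prod.fst}.Finite :=
    (L.map Prod.fst).finite_toSet.preimage (Prod.mk_left_injective a).injOn
  obtain ⟨m, hm, hm'⟩ := Set.exists_min_image _ id hfin ⟨k, h⟩
  obtain ⟨M, hM, hM'⟩ := Set.exists_max_image _ id hfin ⟨k, h⟩
  refine ⟨m, M, hm' M hM, hm, hM, fun q hq hqa => ?_⟩
  have hq' : (q.1, a) ∈ L.map Prod.fst := hqa ▸ hq
  exact ⟨hm' _ hq', hM' _ hq'⟩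

lemma mem_supported_window {L : List ((ℤ × α) × Bool)} {a : α} {m M : ℤ}
    (h : ∀ q ∈ L.map Prod.fst, q ∈ window a m M) : FreeGroup.mk L ∈ supported (window a m M) :=
  supported_mono h (mk_mem_supported_letters L)

/-- If the letter `x` has nonzero exponent sum in `r`, then it occurs in the rewriting of `r`. -/
lemma exists_level_mem_letters {t x : α} {φ : α → ℤ} (hx : x ≠ t) {r : FreeGroup α}
    (hr : exponentSum x r ≠ 1) {L : List ((ℤ × α) × Bool)}
    (hL : IsConj (levels t φ r).left (FreeGroup.mk L)) : ∃ k, (k, x) ∈ L.map Prod.fst := by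
  by_contra! hk
  rw [← exponentSum_levels hx r (φ := φ)] at hr
  have h1 := isConj_iff_eq.1 (((exponentSum x).comp (FreeGroup.map Prod.snd)).map_isConj hL)
  refine hr (h1.trans ?_)
  refine eq_of_mem_supported (g := 1) (fun p hp => ?_) (mk_mem_supported_letters L)
  have hpx : p.2 ≠ x := fun h => hk p.1 (h ▸ hp)
  simp [exponentSum, hpx]

/-- A nontrivial consequence `h` of `r` involves, after rewriting, extremal letters of a translate
of the rewriting of `r`. -/
lemma exists_letters_detecting {L : List (α × Bool)} {t : α} {φ : α → ℤ}
    (ht : t ∈ L.map Prod.fst) (hφ : φ t ≠ 0) (hr : (levels t φ (FreeGroup.mk L)).right = 1)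
    (hfree : ∀ L' : List ((ℤ × α) × Bool), L'.length < L.length →
      ∀ q, IsEssential (FreeGroup.mk L') q → OthersFree (FreeGroup.mk L') q)
    {h : FreeGroup α} (hmem : h ∈ normalClosure {FreeGroup.mk L}) (h1 : h ≠ 1) :
    ∃ L' : List ((ℤ × α) × Bool), IsConj (levels t φ (FreeGroup.mk L)).left (FreeGroup.mk L') ∧
      ∃ c d, c ≤ d ∧ ∀ q ∈ L'.map Prod.fst, ∃ m M, m ≤ q.1 ∧ q.1 ≤ M ∧
        (levels t φ h).left ∉ supported {(m + c, q.2)}ᶜ ∧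
        (levels t φ h).left ∉ supported {(M + d, q.2)}ᶜ := by
  obtain ⟨L', hlen, hc, he⟩ := exists_essential_levels ht φ
  obtain ⟨hhr, hhl⟩ := levels_mem_normalClosure hr hmem
  obtain ⟨C, hC, hmin⟩ :=
    exists_minimal_translates (normalClosure_translates_of_isConj hc _ hhl)
  have hne : C.Nonempty := by
    by_contra hCe
    rw [Finset.not_nonempty_iff_eq_empty] at hCe
    subst hCe
    refine h1 ?_
    have h2 : (levels t φ h).left = 1 := by simpa [translates] using hC
    rw [← unlevel_levels hφ hhr, h2, map_one]
  have hfree' := fun q hq => hfree L' hlen q (isEssential_of_mem_letters he q hq)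
  refine ⟨L', hc, C.min' hne, C.max' hne, C.min'_le_max' hne, fun q hq => ?_⟩
  obtain ⟨m, M, hmM, hm, hM, hwin⟩ := exists_window (k := q.1) (a := q.2) hq
  have h2 := hmin hne q.2 m M (mem_supported_window hwin) hmM (hfree' _ hm) (hfree' _ hM)
  exact ⟨m, M, (hwin q hq rfl).1, (hwin q hq rfl).2, h2.2, h2.1⟩

lemma levels_left_mem_supported_zero {t : α} {w : FreeGroup α}
    (hw : w ∈ supported {t}ᶜ) :
    (levels t (unitWeight t) w).left ∈ supported {p | p.1 = 0} := by
  have h1 : levels t (unitWeight t) w =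
      SemidirectProduct.inl (FreeGroup.map (fun x => ((0 : ℤ), x)) w) :=
    eq_of_mem_supported (g := SemidirectProduct.inl.comp (FreeGroup.map fun x => ((0 : ℤ), x)))
      (fun y hy => by
        have hy' : y ≠ t := hy
        ext <;> simp [levels, unitWeight, hy']) hw
  rw [h1, SemidirectProduct.left_inl]
  exact supported_le (H := (supported {p : ℤ × α | p.1 = 0}).comap
    (FreeGroup.map fun x => ((0 : ℤ), x))) (fun x _ => by
      rw [mem_comap, FreeGroup.map.of]
      exact of_mem_supported rfl) hw

lemma eq_zero_of_levels_left_notMem {t y : α} {j : ℤ} {w : FreeGroup α}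
    (hw : w ∈ supported {t}ᶜ) (hj : (levels t (unitWeight t) w).left ∉ supported {(j, y)}ᶜ) :
    j = 0 := by
  by_contra hj0
  have hsub : {p : ℤ × α | p.1 = 0} ⊆ {(j, y)}ᶜ := by
    rintro p hp hp'
    rw [Set.mem_singleton_iff.1 hp'] at hp
    exact hj0 hp
  exact hj (supported_mono hsub (levels_left_mem_supported_zero hw))

lemma exists_isConj_unlevel_mem_supported {t : α} {k : ℤ}
    {w : FreeGroup (ℤ × α)} (hw : w ∈ supported {p | p.1 = k}) :
    ∃ v ∈ supported {t}ᶜ, IsConj (unlevel t (unitWeight t) w) v := by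
  refine ⟨_, ?_, isConj_iff.2 ⟨FreeGroup.of t ^ (-k), rfl⟩⟩
  refine supported_le (H := (supported {t}ᶜ).comap ((MulAut.conj (FreeGroup.of t ^ (-k))).toMonoidHom.comp
    (unlevel t (unitWeight t)))) (fun p hp => ?_) hw
  have hp' : p.1 = k := hp
  change FreeGroup.of t ^ (-k) * unlevel t _ (FreeGroup.of p) * (FreeGroup.of t ^ (-k))⁻¹ ∈
    supported {t}ᶜ
  by_cases hpt : p.2 = t
  · simp [unlevel, hpt]
  · have := of_mem_supported (S := {t}ᶜ) hpt
    simpa [unlevel, unitWeight, hpt, hp', mul_assoc] using this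

/-- **Magnus' Freiheitssatz**. -/
theorem othersFree_of_isEssential (n : ℕ) : ∀ {α : Type u} (L : List (α × Bool)), L.length = n →
    ∀ x, IsEssential (FreeGroup.mk L) x → OthersFree (FreeGroup.mk L) x := by
  classical
  induction n using Nat.strong_induction_on with
  | _ n ih =>
    intro α L hn x hx h hh hmem
    by_contra h1
    have hxL := mem_letters_of_isEssential hx
    have hfree : ∀ L' : List ((ℤ × α) × Bool), L'.length < L.length →
        ∀ q, IsEssential (FreeGroup.mk L') q → OthersFree (FreeGroup.mk L') q :=
      fun L' hL' => ih _ (hL'.trans_eq hn) L' rfl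
    by_cases hsum : exponentSum x (FreeGroup.mk L) = 1
    · have hr := (levels_right_eq_exponentSum (t := x) (FreeGroup.mk L)).trans hsum
      have hφ := unitWeight_self_ne_zero x
      obtain ⟨L', hc, c, d, hcd, hdet⟩ := exists_letters_detecting hxL hφ hr hfree hmem h1
      have hlevel : ∀ q ∈ L'.map Prod.fst, q ∈ {p : ℤ × α | p.1 = -d} := by
        intro q hq
        obtain ⟨m, M, hm, hM, h2, h3⟩ := hdet q hq
        have h4 := eq_zero_of_levels_left_notMem hh h2
        have h5 := eq_zero_of_levels_left_notMem hh h3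
        change q.1 = -d
        omega
      obtain ⟨v, hv, hconj⟩ := exists_isConj_unlevel_mem_supported (t := x)
        (supported_mono hlevel (mk_mem_supported_letters L'))
      have h2 := (unlevel x (unitWeight x)).map_isConj hc
      rw [unlevel_levels hφ hr] at h2
      exact hx v hv (h2.trans hconj)
    · by_cases ht : ∃ t ∈ L.map Prod.fst, x ≠ t
      · obtain ⟨t, ht, hxt⟩ := ht
        obtain ⟨φ, hφ, hr⟩ := exists_levels_right_eq_one hxt hsum
        obtain ⟨L', hc, c, d, hcd, hdet⟩ := exists_letters_detecting ht hφ hr hfree hmem h1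
        obtain ⟨k, hk⟩ := exists_level_mem_letters hxt hsum hc
        obtain ⟨m, M, -, -, h2, -⟩ := hdet _ hk
        refine h2 (supported_mono ?_ (levels_left_mem_supported hh))
        rintro p hp hp'
        rw [Set.mem_singleton_iff.1 hp'] at hp
        exact hp rfl
      · push Not at ht
        have h2 : FreeGroup.mk L ∈ (delete x).ker :=
          supported_le (H := (delete x).ker) (S := {y | y ∈ L.map Prod.fst})
            (fun y hy => by simp [MonoidHom.mem_ker, delete, ← ht y hy])
            (mk_mem_supported_letters L)
        have h3 := normalClosure_le_normal (Set.singleton_subset_iff.2 h2) hmem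
        rw [MonoidHom.mem_ker, delete_eq_self hh] at h3
        exact h1 h3

end Magnus

section Conjugacy

universe u

variable {α : Type u}

lemma exists_shift_normalClosure_eq {L K : List ((ℤ × α) × Bool)}
    (hL : ∀ q ∈ L.map Prod.fst, OthersFree (FreeGroup.mk L) q)
    (hK : ∀ q ∈ K.map Prod.fst, OthersFree (FreeGroup.mk K) q)
    (hKL : FreeGroup.mk K ∈ normalClosure (translates (FreeGroup.mk L) Set.univ))
    (hLK : FreeGroup.mk L ∈ normalClosure (translates (FreeGroup.mk K) Set.univ))
    (hL1 : FreeGroup.mk L ≠ 1) (hK1 : FreeGroup.mk K ≠ 1) :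
    ∃ c : ℤ, normalClosure {shift c (FreeGroup.mk L)} = normalClosure {FreeGroup.mk K} := by
  obtain ⟨C, hC, hCmin⟩ := exists_minimal_translates hKL
  obtain ⟨D, hD, hDmin⟩ := exists_minimal_translates hLK
  have hCne : C.Nonempty := by
    by_contra h
    rw [Finset.not_nonempty_iff_eq_empty] at h
    exact hK1 (by simpa [translates, h] using hC)
  have hDne : D.Nonempty := by
    by_contra h
    rw [Finset.not_nonempty_iff_eq_empty] at h
    exact hL1 (by simpa [translates, h] using hD)
  obtain ⟨⟨k, a⟩, hka⟩ : ∃ q, q ∈ L.map Prod.fst := by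
    refine List.exists_mem_of_ne_nil _ fun h => hL1 ?_
    rw [List.map_eq_nil_iff.1 h, FreeGroup.one_eq_mk]
  obtain ⟨m, M, hmM, hm, hM, hwin⟩ := exists_window hka
  obtain ⟨h1, h2⟩ := hCmin hCne a m M (mem_supported_window hwin) hmM (hL _ hm) (hL _ hM)
  replace h1 := mem_letters_of_notMem_supported h1
  replace h2 := mem_letters_of_notMem_supported h2
  obtain ⟨m', M', hmM', hm', hM', hwin'⟩ := exists_window h1
  obtain ⟨h3, h4⟩ := hDmin hDne a m' M' (mem_supported_window hwin') hmM' (hK _ hm') (hK _ hM')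
  replace h3 := mem_letters_of_notMem_supported h3
  replace h4 := mem_letters_of_notMem_supported h4
  have i1 := (hwin' _ h1 rfl).2
  have i2 := (hwin' _ h2 rfl).1
  have i3 := (hwin _ h3 rfl).2
  have i4 := (hwin _ h4 rfl).1
  have iC := C.min'_le_max' hCne
  have iD := D.min'_le_max' hDne
  simp only at i1 i2 i3 i4
  have hCsub : ∀ c ∈ C, c = C.max' hCne := fun c hc => by
    have := C.le_max' c hc
    have := C.min'_le c hc
    omega
  have hDsub : ∀ d ∈ D, d = -C.max' hCne := fun d hd => by
    have := D.le_max' d hd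
    have := D.min'_le d hd
    omega
  refine ⟨C.max' hCne, le_antisymm ?_ ?_⟩
  · refine normalClosure_le_normal (Set.singleton_subset_iff.2 ?_)
    refine map_mem_normalClosure (shift (C.max' hCne)).toMonoidHom ?_ hD
    rintro _ ⟨d, hd, rfl⟩
    change shift _ (shift d _) ∈ _
    rw [shift_shift, hDsub d hd, add_neg_cancel, shift_zero]
    exact subset_normalClosure rfl
  · refine normalClosure_le_normal (Set.singleton_subset_iff.2 (normalClosure_mono ?_ hC))
    rintro _ ⟨c, hc, rfl⟩
    rw [Set.mem_singleton_iff]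
    exact congrArg (fun c => shift c (FreeGroup.mk L)) (hCsub c hc)

lemma isConj_inv {G : Type*} [Group G] {a b : G} (h : IsConj a b) : IsConj a⁻¹ b⁻¹ := by
  obtain ⟨c, rfl⟩ := isConj_iff.1 h
  exact isConj_iff.2 ⟨c, by group⟩

lemma exists_eq_zpow_of_mem_supported {x : α} {w : FreeGroup α} (hw : w ∈ supported {x}) :
    ∃ n : ℤ, w = FreeGroup.of x ^ n := by
  rw [supported, Set.image_singleton, ← zpowers_eq_closure] at hw
  obtain ⟨n, hn⟩ := mem_zpowers_iff.1 hw
  exact ⟨n, hn.symm⟩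

lemma dvd_of_zpow_mem_normalClosure {x : α} {n k : ℤ}
    (h : FreeGroup.of x ^ k ∈ normalClosure {FreeGroup.of x ^ n}) : n ∣ k := by
  have hsum : ∀ j : ℤ, exponentSum x (FreeGroup.of x ^ j) = Multiplicative.ofAdd j := fun j => by
    simp [exponentSum, ← ofAdd_zsmul]
  have h1 : FreeGroup.of x ^ k ∈
      (zpowers (Multiplicative.ofAdd n)).comap (exponentSum x) := by
    refine normalClosure_le_normal (Set.singleton_subset_iff.2 ?_) h
    change exponentSum x _ ∈ zpowers _
    rw [hsum]
    exact mem_zpowers _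
  rw [mem_comap, hsum, mem_zpowers_iff] at h1
  obtain ⟨j, hj⟩ := h1
  rw [← ofAdd_zsmul] at hj
  have := Multiplicative.ofAdd.injective hj
  exact ⟨j, by rw [← this, smul_eq_mul, mul_comm]⟩

lemma isConj_of_mem_supported_singleton {x : α} {r s : FreeGroup α} (hr : r ∈ supported {x})
    (hr1 : r ≠ 1) (hrs : normalClosure {r} = normalClosure {s}) :
    IsConj s r ∨ IsConj s r⁻¹ := by
  obtain ⟨L, rfl⟩ : ∃ L, FreeGroup.mk L = s := Quot.exists_rep s
  obtain ⟨K, -, hc, he⟩ := exists_isConj_forall_isEssential L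
  rw [normalClosure_singleton_of_isConj hc] at hrs
  have hK : ∀ y ∈ K.map Prod.fst, y ∈ ({x} : Set α) := by
    intro y hy
    by_contra hyx
    have hsub : ({x} : Set α) ⊆ {y}ᶜ := by
      rintro z hz hz'
      exact hyx ((Set.mem_singleton_iff.1 hz').symm.trans (Set.mem_singleton_iff.1 hz))
    have hrK : r ∈ normalClosure {FreeGroup.mk K} := by
      rw [← hrs]
      exact subset_normalClosure (Set.mem_singleton r)
    exact hr1 (othersFree_of_isEssential _ K rfl y (isEssential_of_mem_letters he y hy) r
      (supported_mono hsub hr) hrK)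
  obtain ⟨n, rfl⟩ := exists_eq_zpow_of_mem_supported hr
  obtain ⟨k, hk⟩ := exists_eq_zpow_of_mem_supported
    (supported_mono hK (mk_mem_supported_letters K))
  rw [hk] at hrs hc
  have hnk : n ∣ k := dvd_of_zpow_mem_normalClosure (x := x) (by
    rw [hrs]
    exact subset_normalClosure (Set.mem_singleton _))
  have hkn : k ∣ n := dvd_of_zpow_mem_normalClosure (x := x) (by
    rw [← hrs]
    exact subset_normalClosure (Set.mem_singleton _))
  rcases Int.natAbs_eq_natAbs_iff.1 (Nat.dvd_antisymm (Int.natAbs_dvd_natAbs.2 hkn)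
    (Int.natAbs_dvd_natAbs.2 hnk)) with rfl | rfl
  · exact Or.inl hc
  · exact Or.inr (by rwa [← zpow_neg])

/-- **Magnus' conjugacy theorem**: elements of a free group with the same normal closure are
conjugate up to inversion. -/
theorem isConj_or_isConj_inv_of_normalClosure_eq (n : ℕ) : ∀ {α : Type u} (L : List (α × Bool))
    (s : FreeGroup α), L.length = n → normalClosure {FreeGroup.mk L} = normalClosure {s} →
    IsConj s (FreeGroup.mk L) ∨ IsConj s (FreeGroup.mk L)⁻¹ := by
  induction n using Nat.strong_induction_on with
  | _ n ih =>
    intro α L s hn hrs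
    have hsr : s ∈ normalClosure {FreeGroup.mk L} := hrs ▸ subset_normalClosure rfl
    have hrs' : FreeGroup.mk L ∈ normalClosure {s} := hrs ▸ subset_normalClosure rfl
    by_cases hr1 : FreeGroup.mk L = 1
    · rw [hr1, normalClosure_eq_bot_iff.2 subset_rfl, mem_bot] at hsr
      rw [hsr, hr1]
      exact Or.inl (IsConj.refl _)
    have hs1 : s ≠ 1 := fun h => by
      rw [h, normalClosure_eq_bot_iff.2 subset_rfl, mem_bot] at hrs'
      exact hr1 hrs'
    by_cases hred : ∃ t ∈ L.map Prod.fst, ∃ φ : α → ℤ, φ t ≠ 0 ∧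
        (levels t φ (FreeGroup.mk L)).right = 1
    · obtain ⟨t, ht, φ, hφ, hr⟩ := hred
      obtain ⟨K, rfl⟩ : ∃ K, FreeGroup.mk K = s := Quot.exists_rep s
      obtain ⟨L', hlen, hL', heL⟩ := exists_essential_levels ht φ
      obtain ⟨hs, hsl⟩ := levels_mem_normalClosure hr hsr
      obtain ⟨-, hrl⟩ := levels_mem_normalClosure hs hrs'
      obtain ⟨K₁, -, hK₁⟩ := exists_mk_eq_shift_levels (t := t) (φ := φ) K 0
      obtain ⟨K', -, hK', heK⟩ := exists_isConj_forall_isEssential K₁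
      rw [hK₁, shift_zero] at hK'
      have hne : ∀ (w v), w ≠ 1 → (levels t φ w).right = 1 → IsConj (levels t φ w).left v →
          v ≠ 1 := by
        rintro w v hw hw0 hwv rfl
        rw [isConj_one_left] at hwv
        rw [← unlevel_levels hφ hw0, hwv, map_one] at hw
        exact hw rfl
      have hmem : ∀ {v w ρ σ : FreeGroup (ℤ × α)}, IsConj v ρ → IsConj w σ →
          w ∈ normalClosure (translates v Set.univ) →
          σ ∈ normalClosure (translates ρ Set.univ) := by
        intro v w ρ σ hv hw h
        obtain ⟨g, rfl⟩ := isConj_iff.1 hw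
        exact normalClosure_normal.conj_mem _ (normalClosure_translates_of_isConj hv _ h) _
      obtain ⟨c, hc⟩ := exists_shift_normalClosure_eq
        (fun q hq => othersFree_of_isEssential _ L' rfl q (isEssential_of_mem_letters heL q hq))
        (fun q hq => othersFree_of_isEssential _ K' rfl q (isEssential_of_mem_letters heK q hq))
        (hmem hL' hK' hsl) (hmem hK' hL' hrl) (hne _ _ hr1 hr hL') (hne _ _ hs1 hs hK')
      rw [shift_mk] at hc
      have hconj := ih _ (hlen.trans_eq hn) _ _ (List.length_map _) hc
      rw [← shift_mk] at hconj
      have h1 : IsConj (FreeGroup.mk K) (unlevel t φ (FreeGroup.mk K')) := by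
        have := (unlevel t φ).map_isConj hK'
        rwa [unlevel_levels hφ hs] at this
      have h2 : IsConj (unlevel t φ (shift c (FreeGroup.mk L'))) (FreeGroup.mk L) := by
        have h3 : IsConj (shift c (levels t φ (FreeGroup.mk L)).left)
            (shift c (FreeGroup.mk L')) := (shift c).toMonoidHom.map_isConj hL'
        exact ((isConj_unlevel_shift_levels hφ hr c).trans ((unlevel t φ).map_isConj h3)).symm
      refine hconj.imp (fun h => ?_) (fun h => ?_)
      · exact (h1.trans ((unlevel t φ).map_isConj h)).trans h2
      · have h3 := (unlevel t φ).map_isConj h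
        rw [map_inv] at h3
        exact (h1.trans h3).trans (isConj_inv h2)
    · push Not at hred
      have hsum : ∀ t ∈ L.map Prod.fst, exponentSum t (FreeGroup.mk L) ≠ 1 := fun t ht h =>
        hred t ht _ (unitWeight_self_ne_zero t) ((levels_right_eq_exponentSum _).trans h)
      obtain ⟨x, hx⟩ : ∃ x, x ∈ L.map Prod.fst := by
        refine List.exists_mem_of_ne_nil _ fun h => hr1 ?_
        rw [List.map_eq_nil_iff.1 h, FreeGroup.one_eq_mk]
      refine isConj_of_mem_supported_singleton (x := x) (supported_mono (fun t ht => ?_)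
        (mk_mem_supported_letters L)) hr1 hrs
      by_contra hxt
      obtain ⟨φ, hφ, hr⟩ := exists_levels_right_eq_one (fun h => hxt h.symm) (hsum x hx)
      exact hred t ht φ hφ hr

end Conjugacy

section Nielsen

variable {G : Type*} [Group G] {m : ℕ}

lemma exists_mulAut_of_nielsenMove {τ τ' : Fin m → G} (h : NielsenMove τ τ') :
    ∃ α : MulAut (FreeGroup (Fin m)), ∀ w, FreeGroup.lift τ (α w) = FreeGroup.lift τ' w := by
  have key : ∀ f g : FreeGroup (Fin m) →* FreeGroup (Fin m),
      (∀ i, g (f (FreeGroup.of i)) = FreeGroup.of i) →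
      (∀ i, f (g (FreeGroup.of i)) = FreeGroup.of i) →
      (∀ i, FreeGroup.lift τ (f (FreeGroup.of i)) = τ' i) →
      ∃ α : MulAut (FreeGroup (Fin m)), ∀ w, FreeGroup.lift τ (α w) = FreeGroup.lift τ' w := by
    intro f g hgf hfg hτ
    refine ⟨f.toMulEquiv g (FreeGroup.ext_hom _ _ hgf) (FreeGroup.ext_hom _ _ hfg), fun w => ?_⟩
    exact DFunLike.congr_fun (f := (FreeGroup.lift τ).comp f) (FreeGroup.ext_hom _ _ fun i => by
      simpa using hτ i) w
  rcases h with ⟨i, rfl⟩ | ⟨i, j, -, rfl⟩ | ⟨i, j, hij, rfl⟩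
  · refine key (FreeGroup.lift (Function.update FreeGroup.of i (FreeGroup.of i)⁻¹))
      (FreeGroup.lift (Function.update FreeGroup.of i (FreeGroup.of i)⁻¹)) ?_ ?_ ?_ <;>
    · intro k
      by_cases hk : k = i
      · subst hk; simp
      · simp [hk]
  · refine key (FreeGroup.lift (FreeGroup.of ∘ Equiv.swap i j))
      (FreeGroup.lift (FreeGroup.of ∘ Equiv.swap i j)) ?_ ?_ ?_ <;> simp
  · refine key
      (FreeGroup.lift (Function.update FreeGroup.of i (FreeGroup.of i * FreeGroup.of j)))
      (FreeGroup.lift (Function.update FreeGroup.of i (FreeGroup.of i * (FreeGroup.of j)⁻¹)))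
      ?_ ?_ ?_ <;>
    · intro k
      by_cases hk : k = i
      · subst hk; simp [hij.symm]
      · simp [hk]

lemma exists_mulAut_of_nielsenEquiv {τ τ' : Fin m → G} (h : NielsenEquiv τ τ') :
    ∃ α : MulAut (FreeGroup (Fin m)), ∀ w, FreeGroup.lift τ (α w) = FreeGroup.lift τ' w := by
  induction h with
  | refl => exact ⟨1, fun w => rfl⟩
  | tail _ hmove ih =>
    obtain ⟨α, hα⟩ := ih
    obtain ⟨β, hβ⟩ := exists_mulAut_of_nielsenMove hmove
    exact ⟨α * β, fun w => by rw [MulAut.mul_apply, hα, hβ]⟩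

end Nielsen

end OneRelator

open Subgroup in
/-- If the one-relator group `G = F/⟪r⟫` has the Nielsen uniqueness property,
then `G ≅ F/⟪s⟫` iff some automorphism of `F` carries `s` to `r` or `r⁻¹`. -/
theorem iso_iff_aut_of_nielsen_unique {m : ℕ} (hm : 1 < m)
    (r s : FreeGroup (Fin m))
    (hNU : ∀ τ : Fin m → PresentedGroup ({r} : Set (FreeGroup (Fin m))),
      Subgroup.closure (Set.range τ) = ⊤ →
      NielsenEquiv τ (fun i => PresentedGroup.of i)) :
    Nonempty (PresentedGroup ({r} : Set (FreeGroup (Fin m))) ≃*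
        PresentedGroup ({s} : Set (FreeGroup (Fin m)))) ↔
      ∃ α : MulAut (FreeGroup (Fin m)), α s = r ∨ α s = r⁻¹ := by
  constructor
  · rintro ⟨e⟩
    have hgen : closure (Set.range fun i => e.symm (PresentedGroup.of (rels := {s}) i)) = ⊤ := by
      rw [Set.range_comp' e.symm, ← MulEquiv.coe_toMonoidHom, ← MonoidHom.map_closure,
        PresentedGroup.closure_range_of]
      exact map_top_of_surjective _ e.symm.surjective
    obtain ⟨α, hα⟩ := OneRelator.exists_mulAut_of_nielsenEquiv (hNU _ hgen)
    have hlift : ∀ w, FreeGroup.lift (fun i => e.symm (PresentedGroup.of (rels := {s}) i)) w =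
        e.symm (PresentedGroup.mk {s} w) :=
      DFunLike.congr_fun (g := e.symm.toMonoidHom.comp (PresentedGroup.mk {s}))
        (FreeGroup.ext_hom _ _ fun i => by simp [PresentedGroup.of])
    have hlift' : ∀ w, FreeGroup.lift (fun i => PresentedGroup.of (rels := {r}) i) w =
        PresentedGroup.mk {r} w :=
      DFunLike.congr_fun (FreeGroup.ext_hom _ _ fun i => by simp [PresentedGroup.of])
    have hmem : ∀ w, α w ∈ normalClosure {s} ↔ w ∈ normalClosure {r} := fun w => by
      rw [← PresentedGroup.mk_eq_one_iff, ← PresentedGroup.mk_eq_one_iff, ← hlift', ← hα, hlift]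
      exact (map_eq_one_iff e.symm e.symm.injective).symm
    have heq : normalClosure {r} = normalClosure {α⁻¹ s} := by
      refine le_antisymm ?_ ?_ <;>
        refine normalClosure_le_normal (Set.singleton_subset_iff.2 ?_)
      · have h1 := OneRelator.map_mem_normalClosure (α⁻¹ : MulAut _).toMonoidHom
          (t := {α⁻¹ s}) (fun x hx => subset_normalClosure (by
            rw [Set.mem_singleton_iff.1 hx]; rfl)) ((hmem r).2 (subset_normalClosure rfl))
        simpa using h1
      · refine (hmem _).1 ?_
        rw [MulAut.apply_inv_self]
        exact subset_normalClosure rfl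
    have hconj := OneRelator.isConj_or_isConj_inv_of_normalClosure_eq _ r.toWord (α⁻¹ s) rfl
      (by rwa [FreeGroup.mk_toWord])
    rw [FreeGroup.mk_toWord] at hconj
    rcases hconj with h | h <;> obtain ⟨c, hc⟩ := isConj_iff.1 h
    · exact ⟨MulAut.conj c * α⁻¹, Or.inl hc⟩
    · exact ⟨MulAut.conj c * α⁻¹, Or.inr hc⟩
  · rintro ⟨α, hα⟩
    have h1 : normalClosure {α s} = normalClosure {r} := by
      rcases hα with h | h
      · rw [h]
      · rw [h]
        refine le_antisymm ?_ ?_ <;>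
          refine normalClosure_le_normal (Set.singleton_subset_iff.2 ?_)
        · exact inv_mem (subset_normalClosure rfl)
        · exact inv_mem_iff.1 (subset_normalClosure rfl)
    refine ⟨(QuotientGroup.congr (normalClosure {s}) (normalClosure {r}) α ?_).symm⟩
    rw [← h1, map_normalClosure _ _ α.surjective, Set.image_singleton]
    rfl
end
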